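/- arXiv:1309.0173 — 2 statements merged into one kernel-verified Lean document; each statement's English description precedes it below -/
import Mathlib

section
/- Let G be a finite group which is a central product G = MC, where M ≅ SL(2,5), C is a subgroup commuting elementwise with M, and M ∩ C = Z(M) (the center of M, of order 2). Then the average of the degrees of those irreducible complex characters of G that have even degree is at least 18/5. -/
open CategoryTheory

/-- The set of irreducible complex characters of `G`: characters of simple
finite-dimensional complex representations of `G`. -/
noncomputable def IrrChar (G : Type) [Group G] : Set (G → ℂ) :=
  {χ | ∃ V : FDRep ℂ G, Simple V ∧ χ = fun g => V.character g}

/-- The degree of a character, read off from its value at `1`. -/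
noncomputable def charDeg {G : Type} [Group G] (χ : G → ℂ) : ℕ :=
  ⌊(χ 1).re⌋₊

/-- The average degree of the irreducible characters of `G` satisfying a
predicate `p` (with the convention that the average of the empty set is `0`). -/
noncomputable def acdRel (G : Type) [Group G] (p : (G → ℂ) → Prop) : ℝ :=
  (∑ᶠ χ ∈ {χ ∈ IrrChar G | p χ}, (charDeg χ : ℝ)) /
    ({χ ∈ IrrChar G | p χ} : Set (G → ℂ)).ncard

/-- The average character degree of `G`. -/
noncomputable def acd (G : Type) [Group G] : ℝ := acdRel G fun _ => True
/-- The average degree of the irreducible characters of `G` of even degree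
(`0` if there are none). -/
noncomputable def acde (G : Type) [Group G] : ℝ := acdRel G fun χ => Even (charDeg χ)
open Module in
/-- Virtual characters: the subring generated by characters. -/
theorem char_mem_closure {G : Type} [Group G] [Finite G] (n : ℕ) :
    ∀ (V : Type) [AddCommGroup V] [Module ℂ V] [FiniteDimensional ℂ V]
      (ρ : Representation ℂ G V), Module.finrank ℂ V ≤ n →
      ρ.character ∈ AddSubgroup.closure (IrrChar G) := by
  have := Fintype.ofFinite G
  have hinv : Invertible (Nat.card G : ℂ) := invertibleOfNonzero (NeZero.ne (Nat.card G : ℂ))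
  induction n with
  | zero =>
    intro V _ _ _ ρ h
    have hs : Subsingleton V := Module.finrank_zero_iff.mp (Nat.le_zero.mp h)
    have : ρ.character = 0 := by
      ext g
      have : ρ g = 0 := by ext v; exact Subsingleton.elim _ _
      simp [Representation.character, this]
    rw [this]; exact zero_mem _
  | succ n ih =>
    intro V _ _ _ ρ h
    by_cases hirr : ρ.IsIrreducible
    · apply AddSubgroup.subset_closure
      refine ⟨FDRep.of ρ, ?_, rfl⟩
      rw [FDRep.simple_iff_char_is_norm_one]
      have := Representation.char_orthonormal ρ ρ
      rw [if_pos ⟨Representation.Equiv.refl ρ⟩, inv_mul_eq_one₀ (NeZero.ne _)] at this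
      exact this.symm
    · by_cases hs : Subsingleton V
      · exact ih V ρ (by rw [Module.finrank_zero_iff.mpr hs]; exact Nat.zero_le _)
      have hnt : Nontrivial V := not_subsingleton_iff_nontrivial.mp hs
      obtain ⟨W, hW0, hW1⟩ : ∃ W : Subrepresentation ρ, W ≠ ⊥ ∧ W ≠ ⊤ := by
        by_contra! hcon
        apply hirr
        refine { exists_pair_ne := ⟨⊥, ⊤, ?_⟩, eq_bot_or_eq_top := fun W => ?_ }
        · intro h
          have : (⊥ : Submodule ℂ V) = ⊤ := congrArg Subrepresentation.toSubmodule h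
          exact bot_ne_top this
        · by_cases h : W = ⊥
          · exact Or.inl h
          · exact Or.inr (hcon W h)
      obtain ⟨W', hc⟩ := exists_isCompl W
      have hc' : IsCompl W.toSubmodule W'.toSubmodule := by
        constructor
        · rw [disjoint_iff, ← Subrepresentation.toSubmodule_inf, hc.inf_eq_bot]; rfl
        · rw [codisjoint_iff, ← Subrepresentation.toSubmodule_sup, hc.sup_eq_top]; rfl
      have hsum := Submodule.finrank_add_eq_of_isCompl hc'
      have hW0' : W.toSubmodule ≠ ⊥ := fun h => hW0 (Subrepresentation.toSubmodule_injective h)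
      have hW1' : W.toSubmodule ≠ ⊤ := fun h => hW1 (Subrepresentation.toSubmodule_injective h)
      have h1 := Submodule.finrank_lt hW1'
      have h2 : 0 < finrank ℂ W.toSubmodule := by
        rw [Module.finrank_pos_iff]; exact Submodule.nontrivial_iff_ne_bot.mpr hW0'
      have : ρ.character = W.toRepresentation.character + W'.toRepresentation.character := by
        ext g
        simp only [Representation.character, Pi.add_apply]
        have hInternal := DirectSum.isInternal_submodule_iff_isCompl
          (fun b : Bool => cond b W.toSubmodule W'.toSubmodule) (i := true) (j := false)
          (by decide) (by ext b; cases b <;> simp) |>.mpr hc'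
        have := LinearMap.trace_eq_sum_trace_restrict hInternal (f := ρ g) (by
          intro b; cases b
          · exact W'.apply_mem_toSubmodule g
          · exact W.apply_mem_toSubmodule g)
        rw [this, Fintype.sum_bool]
        rfl
      rw [this]
      exact add_mem (ih _ _ (by omega)) (ih _ _ (by omega))

/-- the ring of virtual characters -/
def VChar (G : Type) [Group G] : Subring (G → ℂ) :=
  Subring.closure {f | ∃ V : FDRep ℂ G, f = V.character}

theorem vchar_char {G : Type} [Group G] (V : FDRep ℂ G) : V.character ∈ VChar G :=
  Subring.subset_closure ⟨V, rfl⟩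

theorem vchar_rep {G : Type} [Group G] (V : Type) [AddCommGroup V] [Module ℂ V]
    [FiniteDimensional ℂ V] (ρ : Representation ℂ G V) : ρ.character ∈ VChar G :=
  Subring.subset_closure ⟨FDRep.of ρ, rfl⟩

open MonoidalCategory in
theorem vchar_mem_closure {G : Type} [Group G] [Finite G] {f : G → ℂ} (hf : f ∈ VChar G) :
    f ∈ AddSubgroup.closure (IrrChar G) := by
  rw [VChar, Subring.mem_closure_iff] at hf
  refine (AddSubgroup.closure_le _).mpr ?_ hf
  intro x hx
  have : ∃ V : FDRep ℂ G, x = V.character := by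
    induction hx using Submonoid.closure_induction with
    | mem x h => exact h
    | one =>
      refine ⟨FDRep.of (Representation.trivial ℂ G ℂ), ?_⟩
      ext g
      simp [FDRep.character]
    | mul x y _ _ h1 h2 =>
      obtain ⟨V, rfl⟩ := h1
      obtain ⟨W, rfl⟩ := h2
      exact ⟨V ⊗ W, (FDRep.char_tensor V W).symm⟩
  obtain ⟨V, rfl⟩ := this
  exact char_mem_closure _ V V.ρ le_rfl

/-- The bilinear form on class functions -/
noncomputable def ip {G : Type} [Group G] [Fintype G] (f h : G → ℂ) : ℂ :=
  (Nat.card G : ℂ)⁻¹ * ∑ g : G, f g * h g⁻¹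

theorem ip_irr {G : Type} [Group G] [Fintype G] {f h : G → ℂ} (hf : f ∈ IrrChar G)
    (hh : h ∈ IrrChar G) : ip f h = if f = h then 1 else 0 := by
  classical
  have hinv : Invertible (Nat.card G : ℂ) := invertibleOfNonzero (NeZero.ne (Nat.card G : ℂ))
  obtain ⟨V, hV, rfl⟩ := hf
  obtain ⟨W, hW, rfl⟩ := hh
  have h1 := FDRep.char_orthonormal V W
  by_cases hi : Nonempty (V ≅ W)
  · have : V.character = W.character := FDRep.char_iso hi.some
    rw [if_pos hi] at h1
    rw [if_pos this]; exact h1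
  · rw [if_neg hi] at h1
    have h2 := FDRep.char_orthonormal V V
    rw [if_pos ⟨Iso.refl V⟩] at h2
    rw [if_neg]
    · exact h1
    · intro h
      have h : V.character = W.character := h
      rw [h] at h2
      rw [h] at h1
      rw [h1] at h2
      exact zero_ne_one h2

theorem ip_sum_left {G : Type} [Group G] [Fintype G] {ι : Type*} (s : Finset ι) (c : ι → ℂ)
    (f : ι → G → ℂ) (h : G → ℂ) : ip (∑ i ∈ s, c i • f i) h = ∑ i ∈ s, c i * ip (f i) h := by
  simp only [ip, Finset.sum_apply, Pi.smul_apply, smul_eq_mul, Finset.sum_mul, Finset.mul_sum]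
  rw [Finset.sum_comm]
  refine Finset.sum_congr rfl fun i _ => Finset.sum_congr rfl fun g _ => by ring

theorem ip_sum_right {G : Type} [Group G] [Fintype G] {ι : Type*} (s : Finset ι) (c : ι → ℂ)
    (f : ι → G → ℂ) (h : G → ℂ) : ip h (∑ i ∈ s, c i • f i) = ∑ i ∈ s, c i * ip h (f i) := by
  simp only [ip, Finset.sum_apply, Pi.smul_apply, smul_eq_mul, Finset.mul_sum]
  rw [Finset.sum_comm]
  refine Finset.sum_congr rfl fun i _ => Finset.sum_congr rfl fun g _ => by ring

theorem irr_finite (G : Type) [Group G] [Finite G] : (IrrChar G).Finite := by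
  have := Fintype.ofFinite G
  have : LinearIndependent ℂ (fun f : IrrChar G => (f : G → ℂ)) := by
    rw [linearIndependent_iff']
    intro s c hc i hi
    have := ip_sum_left s c (fun f : IrrChar G => (f : G → ℂ)) i
    rw [hc] at this
    rw [Finset.sum_eq_single i] at this
    · rw [ip_irr i.2 i.2, if_pos rfl, mul_one] at this
      rw [← this]; simp [ip]
    · intro b _ hb
      rw [ip_irr b.2 i.2, if_neg (fun h => hb (Subtype.ext h)), mul_zero]
    · exact fun h => absurd hi h
  exact this.finite

theorem deg_pos_irr {G : Type} [Group G] [Finite G] {f : G → ℂ} (hf : f ∈ IrrChar G) :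
    0 < charDeg f ∧ f 1 = charDeg f := by
  have := Fintype.ofFinite G
  have h1 := ip_irr hf hf
  obtain ⟨V, hV, rfl⟩ := hf
  have e : V.character 1 = (Module.finrank ℂ V : ℂ) := FDRep.char_one V
  have e' : charDeg (fun g => V.character g) = Module.finrank ℂ V := by
    simp only [charDeg, e]; simp
  refine ⟨?_, by rw [e']; exact e⟩
  rw [e', Nat.pos_iff_ne_zero]
  intro h0
  have hs : Subsingleton V := Module.finrank_zero_iff.mp h0
  have : (fun g => V.character g) = 0 := by
    ext g
    have : V.ρ g = 0 := by ext v; exact Subsingleton.elim _ _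
    simp [FDRep.character, this]
  rw [this] at h1
  simp [ip] at h1

/-- A virtual character of norm one and positive degree is an irreducible character. -/
theorem irr_of_norm_one {G : Type} [Group G] [Fintype G] {f : G → ℂ} (hf : f ∈ VChar G)
    (hn : ip f f = 1) (d : ℕ) (hd : f 1 = d) : f ∈ IrrChar G := by
  classical
  have hfc := vchar_mem_closure hf
  obtain ⟨c, hc⟩ : ∃ c : (G → ℂ) → ℤ,
      f = ∑ χ ∈ (irr_finite G).toFinset, (c χ : ℂ) • χ := by
    clear hf hn hd
    induction hfc using AddSubgroup.closure_induction with
    | mem x h =>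
      refine ⟨fun χ => if χ = x then 1 else 0, ?_⟩
      rw [Finset.sum_eq_single x]
      · simp
      · intro b _ hb; simp [hb]
      · intro h'; exact absurd ((irr_finite G).mem_toFinset.mpr h) h'
    | zero => exact ⟨0, by simp⟩
    | add x y _ _ h1 h2 =>
      obtain ⟨c1, h1⟩ := h1
      obtain ⟨c2, h2⟩ := h2
      refine ⟨c1 + c2, ?_⟩
      conv_lhs => rw [h1, h2]
      rw [← Finset.sum_add_distrib]
      exact Finset.sum_congr rfl fun i _ => by simp [add_smul]
    | neg x _ h1 =>
      obtain ⟨c1, h1⟩ := h1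
      refine ⟨-c1, ?_⟩
      conv_lhs => rw [h1]
      rw [← Finset.sum_neg_distrib]
      exact Finset.sum_congr rfl fun i _ => by simp
  have hfχ : ∀ χ ∈ (irr_finite G).toFinset, ip f χ = c χ := by
    intro χ hχ
    rw [hc, ip_sum_left, Finset.sum_eq_single χ]
    · rw [ip_irr (by simpa using hχ) (by simpa using hχ)]; simp
    · intro b hb hbn
      rw [ip_irr (by simpa using hb) (by simpa using hχ), if_neg hbn, mul_zero]
    · exact fun h => absurd hχ h
  have hns : ∑ χ ∈ (irr_finite G).toFinset, (c χ) ^ 2 = 1 := by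
    have h2 : ip f f = ∑ χ ∈ (irr_finite G).toFinset, (c χ : ℂ) * ip f χ := by
      conv_lhs => rw [show ip f f = ip f (∑ χ ∈ (irr_finite G).toFinset, (c χ : ℂ) • χ) by rw [← hc]]
      rw [ip_sum_right]
    rw [hn, Finset.sum_congr rfl (fun χ hχ => by rw [hfχ χ hχ])] at h2
    have h3 : ((∑ χ ∈ (irr_finite G).toFinset, (c χ) ^ 2 : ℤ) : ℂ) = (1 : ℤ) := by
      push_cast; rw [h2]; exact Finset.sum_congr rfl fun i _ => by ring
    exact_mod_cast h3
  obtain ⟨χ, hχ, hχ0⟩ : ∃ χ ∈ (irr_finite G).toFinset, c χ ≠ 0 := by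
    by_contra! h
    rw [Finset.sum_eq_zero (fun χ hχ => by rw [h χ hχ]; rfl)] at hns
    exact zero_ne_one hns
  rw [← Finset.add_sum_erase _ _ hχ] at hns
  have hpos : 0 < c χ ^ 2 := by positivity
  have hnn : 0 ≤ ∑ x ∈ (irr_finite G).toFinset.erase χ, c x ^ 2 :=
    Finset.sum_nonneg fun _ _ => sq_nonneg _
  have h0 : ∑ x ∈ (irr_finite G).toFinset.erase χ, c x ^ 2 = 0 := by omega
  rw [Finset.sum_eq_zero_iff_of_nonneg (fun _ _ => sq_nonneg _)] at h0
  have hc1 : c χ ^ 2 = 1 := by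
    rw [Finset.sum_eq_zero h0] at hns; omega
  rw [← Finset.add_sum_erase _ _ hχ, Finset.sum_eq_zero (fun x hx => by
    have := h0 x hx
    rw [pow_eq_zero_iff (by norm_num)] at this
    rw [this]; simp)] at hc
  rw [add_zero] at hc
  have hχ' : χ ∈ IrrChar G := by simpa using hχ
  rcases (show c χ = 1 ∨ c χ = -1 from sq_eq_one_iff.mp hc1) with h | h
  · rw [hc, h]; simpa using hχ'
  · exfalso
    obtain ⟨hp, hdeg⟩ := deg_pos_irr hχ'
    rw [hc, h] at hd
    simp only [Int.cast_neg, Int.cast_one, Pi.smul_apply, smul_eq_mul, hdeg] at hd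
    have : ((charDeg χ + d : ℕ) : ℂ) = 0 := by push_cast; rw [← hd]; ring
    have := Nat.cast_eq_zero.mp this
    omega
/-- label of the conjugacy class of a matrix in `SL(2,5)` -/
def clE (a b c d : ZMod 5) : Fin 9 :=
  if a + d = 0 then 2
  else if a + d = 4 then 3
  else if a + d = 1 then 4
  else if a + d = 2 then
    (if b = 0 ∧ c = 0 then 0
     else if b = 1 ∨ b = 4 ∨ (b = 0 ∧ (c = 1 ∨ c = 4)) then 5 else 6)
  else
    (if b = 0 ∧ c = 0 then 1
     else if b = 1 ∨ b = 4 ∨ (b = 0 ∧ (c = 1 ∨ c = 4)) then 7 else 8)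

/-- representatives of the classes -/
def repE (k : Fin 9) : ZMod 5 × ZMod 5 × ZMod 5 × ZMod 5 :=
  ![(1, 0, 0, 1), (4, 0, 0, 4), (0, 4, 1, 0), (0, 1, 4, 4), (0, 4, 1, 1),
    (1, 1, 0, 1), (1, 2, 0, 1), (4, 4, 0, 4), (4, 3, 0, 4)] k

theorem conjE : ∀ a b c d : ZMod 5, a * d - b * c = 1 →
    ∃ p q r s : ZMod 5, p * s - q * r = 1 ∧
      p * a + q * c = (repE (clE a b c d)).1 * p + (repE (clE a b c d)).2.1 * r ∧
      p * b + q * d = (repE (clE a b c d)).1 * q + (repE (clE a b c d)).2.1 * s ∧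
      r * a + s * c = (repE (clE a b c d)).2.2.1 * p + (repE (clE a b c d)).2.2.2 * r ∧
      r * b + s * d = (repE (clE a b c d)).2.2.1 * q + (repE (clE a b c d)).2.2.2 * s := by
  decide +kernel

/-- class sizes -/
def szE (k : Fin 9) : ℕ := ![1, 1, 30, 20, 20, 12, 12, 12, 12] k

theorem countE : ∀ k : Fin 9, (Finset.univ.filter fun x : ZMod 5 × ZMod 5 × ZMod 5 × ZMod 5 =>
    x.1 * x.2.2.2 - x.2.1 * x.2.2.1 = 1 ∧ clE x.1 x.2.1 x.2.2.1 x.2.2.2 = k).card = szE k := by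
  decide +kernel
/-- the group `SL(2,5)` -/
abbrev SL25 := Matrix.SpecialLinearGroup (Fin 2) (ZMod 5)

theorem SL25.ext4 {x y : SL25} (h00 : x 0 0 = y 0 0) (h01 : x 0 1 = y 0 1)
    (h10 : x 1 0 = y 1 0) (h11 : x 1 1 = y 1 1) : x = y := by
  ext i j
  fin_cases i <;> fin_cases j <;> assumption

theorem SL25.det4 (x : SL25) : x 0 0 * x 1 1 - x 0 1 * x 1 0 = 1 := by
  have := x.det_coe
  rwa [Matrix.det_fin_two] at this

/-- an element of `SL(2,5)` from its entries -/
def mk4 (a b c d : ZMod 5) (h : a * d - b * c = 1) : SL25 :=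
  ⟨!![a, b; c, d], by rw [Matrix.det_fin_two_of]; exact h⟩

section
variable (a b c d : ZMod 5) (h : a * d - b * c = 1)
@[simp] theorem mk4_00 : mk4 a b c d h 0 0 = a := rfl
@[simp] theorem mk4_01 : mk4 a b c d h 0 1 = b := rfl
@[simp] theorem mk4_10 : mk4 a b c d h 1 0 = c := rfl
@[simp] theorem mk4_11 : mk4 a b c d h 1 1 = d := rfl
end

theorem SL25.mul_e (x y : SL25) (i j : Fin 2) : (x * y) i j = x i 0 * y 0 j + x i 1 * y 1 j := by
  rw [Matrix.SpecialLinearGroup.coe_mul, Matrix.mul_apply, Fin.sum_univ_two]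

theorem SL25.inv00 (x : SL25) : (x⁻¹) 0 0 = x 1 1 := by
  rw [Matrix.SpecialLinearGroup.coe_inv, Matrix.adjugate_fin_two]; rfl
theorem SL25.inv01 (x : SL25) : (x⁻¹) 0 1 = - x 0 1 := by
  rw [Matrix.SpecialLinearGroup.coe_inv, Matrix.adjugate_fin_two]; rfl
theorem SL25.inv10 (x : SL25) : (x⁻¹) 1 0 = - x 1 0 := by
  rw [Matrix.SpecialLinearGroup.coe_inv, Matrix.adjugate_fin_two]; rfl
theorem SL25.inv11 (x : SL25) : (x⁻¹) 1 1 = x 0 0 := by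
  rw [Matrix.SpecialLinearGroup.coe_inv, Matrix.adjugate_fin_two]; rfl

/-- class label -/
def cl (m : SL25) : Fin 9 := clE (m 0 0) (m 0 1) (m 1 0) (m 1 1)

theorem repE_det : ∀ k, (repE k).1 * (repE k).2.2.2 - (repE k).2.1 * (repE k).2.2.1 = 1 := by
  decide

/-- class representative -/
def rp (k : Fin 9) : SL25 := mk4 (repE k).1 (repE k).2.1 (repE k).2.2.1 (repE k).2.2.2 (repE_det k)

theorem conj_rp (m : SL25) : ∃ x : SL25, x * m * x⁻¹ = rp (cl m) := by
  obtain ⟨p, q, r, s, h, h1, h2, h3, h4⟩ := conjE _ _ _ _ m.det4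
  refine ⟨mk4 p q r s h, ?_⟩
  rw [mul_inv_eq_iff_eq_mul]
  apply SL25.ext4 <;> simp only [SL25.mul_e, mk4_00, mk4_01, mk4_10, mk4_11, rp] <;> assumption

theorem cl_inv (m : SL25) : cl m⁻¹ = cl m := by
  have : ∀ a b c d : ZMod 5, clE d (-b) (-c) a = clE a b c d := by decide +kernel
  simp only [cl, SL25.inv00, SL25.inv01, SL25.inv10, SL25.inv11, this]

theorem cl_one : cl 1 = 0 := by decide
theorem cl_rp : ∀ k, cl (rp k) = k := by
  have : ∀ k, clE (repE k).1 (repE k).2.1 (repE k).2.2.1 (repE k).2.2.2 = k := by decide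
  exact this

theorem card_cl (k : Fin 9) : (Finset.univ.filter fun m : SL25 => cl m = k).card = szE k := by
  rw [← countE k]
  refine Finset.card_bij (fun m _ => (m 0 0, m 0 1, m 1 0, m 1 1)) ?_ ?_ ?_
  · intro m hm
    simp only [Finset.mem_filter, Finset.mem_univ, true_and] at hm ⊢
    exact ⟨m.det4, hm⟩
  · intro x _ y _ h
    simp only [Prod.mk.injEq] at h
    exact SL25.ext4 h.1 h.2.1 h.2.2.1 h.2.2.2
  · rintro ⟨a, b, c, d⟩ h
    simp only [Finset.mem_filter, Finset.mem_univ, true_and] at h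
    refine ⟨mk4 a b c d h.1, ?_, rfl⟩
    rw [Finset.mem_filter]
    exact ⟨Finset.mem_univ _, h.2⟩

theorem sum_cl (F : Fin 9 → ℂ) : ∑ m : SL25, F (cl m) = ∑ k, (szE k : ℂ) * F k := by
  rw [← Finset.sum_fiberwise Finset.univ cl]
  refine Finset.sum_congr rfl fun k _ => ?_
  rw [Finset.sum_congr rfl (g := fun _ => F k) (by
    intro m hm; rw [(Finset.mem_filter.mp hm).2]), Finset.sum_const, card_cl, nsmul_eq_mul]

/-- representatives of the five quaternion subgroups -/
def xE (i : Fin 5) : ZMod 5 × ZMod 5 × ZMod 5 :=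
  ![(0, 1, 4), (1, 1, 3), (1, 2, 4), (1, 3, 1), (1, 4, 2)] i

/-- two trace zero elements lie in the same quaternion subgroup -/
def relE (a b c : ZMod 5) (i : Fin 5) : Prop :=
  (a, b, c) = xE i ∨ (-a, -b, -c) = xE i ∨
    2 * a * (xE i).1 + b * (xE i).2.2 + c * (xE i).2.1 = 0

instance (a b c : ZMod 5) (i : Fin 5) : Decidable (relE a b c i) := by
  unfold relE; infer_instance

/-- label of the quaternion subgroup containing a trace zero element -/
def labE (a b c : ZMod 5) : Fin 5 :=
  if relE a b c 0 then 0 else if relE a b c 1 then 1 else if relE a b c 2 then 2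
  else if relE a b c 3 then 3 else 4

/-- label of a conjugate -/
def labC (p q r s a b c : ZMod 5) : Fin 5 :=
  labE ((p * a + q * c) * s - (p * b - q * a) * r) (-((p * a + q * c) * q) + (p * b - q * a) * p)
    ((r * a + s * c) * s - (r * b - s * a) * r)

theorem xE_det : ∀ i, (xE i).1 * (-(xE i).1) - (xE i).2.1 * (xE i).2.2 = 1 := by
  decide

theorem labE_rel : ∀ a b c : ZMod 5, - a * a - b * c = 1 → relE a b c (labE a b c) := by
  decide +kernel

theorem labE_eq : ∀ a b c : ZMod 5, - a * a - b * c = 1 → ∀ a' b' c' : ZMod 5,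
    - a' * a' - b' * c' = 1 →
    ((a, b, c) = (a', b', c') ∨ (-a, -b, -c) = (a', b', c') ∨ 2 * a * a' + b * c' + c * b' = 0) →
    labE a b c = labE a' b' c' := by
  decide +kernel

theorem labC_eq (a b c : ZMod 5) (h : - a * a - b * c = 1) (p q r s : ZMod 5)
    (hd : p * s - q * r = 1) :
    labC p q r s a b c = labC p q r s (xE (labE a b c)).1 (xE (labE a b c)).2.1
      (xE (labE a b c)).2.2 := by
  have hr := labE_rel a b c h
  have hx := xE_det (labE a b c)
  unfold relE at hr
  generalize xE (labE a b c) = x at hr hx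
  obtain ⟨a', b', c'⟩ := x
  simp only at hr hx ⊢
  have hd2 : (p * s - q * r) * (p * s - q * r) = 1 := by rw [hd, one_mul]
  apply labE_eq
  · linear_combination (- a * a - b * c) * hd2 + h
  · linear_combination (- a' * a' - b' * c') * hd2 + hx
  · rcases hr with hr | hr | hr
    · left
      simp only [Prod.mk.injEq] at hr ⊢
      obtain ⟨rfl, rfl, rfl⟩ := hr
      exact ⟨rfl, rfl, rfl⟩
    · right; left
      simp only [Prod.mk.injEq] at hr ⊢
      obtain ⟨rfl, rfl, rfl⟩ := hr
      refine ⟨?_, ?_, ?_⟩ <;> ring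
    · right; right
      linear_combination ((p * s - q * r) * (p * s - q * r)) * hr

/-- representative of the `i`-th quaternion subgroup -/
def xM (i : Fin 5) : SL25 := mk4 (xE i).1 (xE i).2.1 (xE i).2.2 (-(xE i).1) (xE_det i)

/-- label -/
def lab (m : SL25) : Fin 5 := labE (m 0 0) (m 0 1) (m 1 0)

theorem lab_labC (g y : SL25) (h : y 1 1 = - y 0 0) :
    lab (g * y * g⁻¹) = labC (g 0 0) (g 0 1) (g 1 0) (g 1 1) (y 0 0) (y 0 1) (y 1 0) := by
  simp only [lab, labC, SL25.mul_e, SL25.inv00, SL25.inv01, SL25.inv10, SL25.inv11, h]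
  congr 1 <;> ring

theorem lab_conj (g y : SL25) (h : y 1 1 = - y 0 0) :
    lab (g * y * g⁻¹) = lab (g * xM (lab y) * g⁻¹) := by
  rw [lab_labC g y h, lab_labC g (xM (lab y)) rfl]
  refine labC_eq _ _ _ ?_ _ _ _ _ g.det4
  have := y.det4
  rw [h] at this
  refine Eq.trans ?_ this
  ring

theorem lab_xM : ∀ i, lab (xM i) = i := by
  have : ∀ i, labE (xE i).1 (xE i).2.1 (xE i).2.2 = i := by decide
  exact this

/-- the action on five points -/
def actF (g : SL25) (i : Fin 5) : Fin 5 := lab (g * xM i * g⁻¹)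

theorem actF_one (i : Fin 5) : actF 1 i = i := by
  rw [actF, one_mul, inv_one, mul_one, lab_xM]

theorem trace_zero_conj (h : SL25) (i : Fin 5) :
    (h * xM i * h⁻¹) 1 1 = - (h * xM i * h⁻¹) 0 0 := by
  have h0 : xM i 1 1 = - xM i 0 0 := rfl
  simp only [SL25.mul_e, SL25.inv00, SL25.inv01, SL25.inv10, SL25.inv11, h0]
  ring

theorem actF_mul (g h : SL25) (i : Fin 5) : actF (g * h) i = actF g (actF h i) := by
  have e : g * h * xM i * (g * h)⁻¹ = g * (h * xM i * h⁻¹) * g⁻¹ := by group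
  rw [actF, e, lab_conj _ _ (trace_zero_conj h i)]
  rfl

attribute [irreducible] actF

/-- the action of `SL(2,5)` on five points, as a homomorphism -/
def actEnd : SL25 →* Function.End (Fin 5) where
  toFun g := actF g
  map_one' := funext actF_one
  map_mul' g h := funext (actF_mul g h)

theorem actEnd_fix : ∀ k : Fin 9, (Finset.univ.filter fun i => actF (rp k) i = i).card =
    (![5, 5, 1, 2, 2, 0, 0, 0, 0] : Fin 9 → ℕ) k := by
  have : ∀ k : Fin 9, (Finset.univ.filter fun i : Fin 5 => labC (repE k).1 (repE k).2.1
      (repE k).2.2.1 (repE k).2.2.2 (xE i).1 (xE i).2.1 (xE i).2.2 = i).card =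
    (![5, 5, 1, 2, 2, 0, 0, 0, 0] : Fin 9 → ℕ) k := by decide +kernel
  intro k
  rw [← this]
  congr 1
  refine Finset.filter_congr fun i _ => ?_
  rw [actF, lab_labC _ _ rfl]
  rfl

theorem actEnd_central (m : SL25) (h : ∀ x : SL25, m * x = x * m) : actEnd m = 1 := by
  funext i
  change actF m i = i
  rw [actF, h, mul_inv_cancel_right, lab_xM]
/-- 2 by 2 complex matrices -/
abbrev M2 := Matrix (Fin 2) (Fin 2) ℂ

theorem M2.ch (X : M2) (h : X.det = 1) : X * X = X.trace • X - 1 := by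
  rw [Matrix.det_fin_two] at h
  ext i j
  fin_cases i <;> fin_cases j <;>
    simp [Matrix.mul_apply, Fin.sum_univ_two, Matrix.trace_fin_two] <;>
    first | ring1 | linear_combination h | linear_combination (-1 : ℂ) * h

theorem M2.scal (X : M2) (h : X.det = 1) (a b : ℂ) (ha : a ≠ 0) (hab : a • X = b • 1) :
    X = 1 ∨ X = -1 := by
  have h00 := congrFun (congrFun hab 0) 0
  have h01 := congrFun (congrFun hab 0) 1
  have h10 := congrFun (congrFun hab 1) 0
  have h11 := congrFun (congrFun hab 1) 1
  simp [ha] at h00 h01 h10 h11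
  rw [Matrix.det_fin_two, h01, h10] at h
  have e : X 0 0 = X 1 1 := mul_left_cancel₀ ha (h00.trans h11.symm)
  have h2 : X 1 1 ^ 2 = 1 := by rw [e] at h; linear_combination h
  rcases sq_eq_one_iff.mp h2 with h3 | h3
  · left
    ext i j
    fin_cases i <;> fin_cases j <;> simp [h01, h10, e, h3]
  · right
    ext i j
    fin_cases i <;> fin_cases j <;> simp [h01, h10, e, h3]

theorem M2.sq_one (X : M2) (h : X.det = 1) (h2 : X * X = 1) : X = 1 ∨ X = -1 := by
  have hc := M2.ch X h
  rw [h2] at hc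
  have hc' : X.trace • X = (2 : ℂ) • 1 := by
    rw [two_smul]; exact (sub_eq_iff_eq_add.mp hc.symm)
  refine M2.scal X h _ _ ?_ hc'
  intro h0
  rw [h0] at hc'
  have := congrFun (congrFun hc' 0) 0
  simp at this

theorem M2.one_ne_neg : (1 : M2) ≠ -1 := by
  intro h
  have := congrFun (congrFun h 0) 0
  simp at this
  norm_num [eq_neg_iff_add_eq_zero] at this

/-- values of a faithful degree two character of `SL(2,5)` on the classes -/
def al (t : ℂ) (k : Fin 9) : ℂ := ![2, -2, 0, -1, 1, t, -1 - t, -t, 1 + t] k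

theorem SL25.rels : rp 2 * rp 2 = rp 1 ∧ rp 2 * rp 5 = rp 4 ∧ rp 4 * rp 4 * rp 4 = rp 1 ∧
    rp 5 * rp 5 = rp 6 ∧ rp 6 * rp 6 * rp 5 = 1 ∧ rp 1 * rp 4 = rp 3 ∧ rp 1 * rp 5 = rp 7 ∧
    rp 1 * rp 6 = rp 8 ∧ rp 1 * rp 1 = 1 ∧ rp 0 = 1 := by
  refine ⟨?_, ?_, ?_, ?_, ?_, ?_, ?_, ?_, ?_, ?_⟩ <;> apply SL25.ext4 <;>
    (try simp only [SL25.mul_e]) <;> decide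

theorem SL25.relD : ∃ D : SL25, D * rp 5 = rp 6 * rp 6 * D := by
  refine ⟨mk4 2 0 0 3 (by decide), ?_⟩
  apply SL25.ext4 <;> simp only [SL25.mul_e] <;> decide

theorem rep2_trace_conj (ρ : SL25 →* M2) (m : SL25) : (ρ m).trace = (ρ (rp (cl m))).trace := by
  obtain ⟨x, hx⟩ := conj_rp m
  rw [← hx, map_mul, Matrix.trace_mul_comm, ← map_mul]
  congr 2
  group

theorem rep2_dichotomy (ρ : SL25 →* M2) : (∀ m, ρ m = 1) ∨
    (∃ t : ℂ, t ^ 2 + t - 1 = 0 ∧ (∀ m, (ρ m).trace = al t (cl m)) ∧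
      ∃ x y, ρ x * ρ y ≠ ρ y * ρ x) := by
  obtain ⟨r1, r2, r3, r4, r5, r6, r7, r8, r9, r10⟩ := SL25.rels
  obtain ⟨D, rD⟩ := SL25.relD
  set X := ρ (rp 2) with hX
  set Q := ρ (rp 5) with hQ
  set Y := ρ (rp 1) with hY
  have e6 : ρ (rp 6) = Q * Q := by rw [← r4, map_mul]
  have e4 : ρ (rp 4) = X * Q := by rw [← r2, map_mul]
  have e1 : X * X = Y := by rw [hX, ← map_mul, r1]
  have e3 : (X * Q) * (X * Q) * (X * Q) = Y := by rw [← e4, ← map_mul, ← map_mul, r3]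
  have e5 : Q * Q * (Q * Q) * Q = 1 := by rw [← e6, ← map_mul, hQ, ← map_mul, r5, map_one]
  have e7 : ρ (rp 7) = Y * Q := by rw [← r7, map_mul]
  have e8 : ρ (rp 8) = Y * (Q * Q) := by rw [← r8, map_mul, e6]
  have e33 : ρ (rp 3) = Y * (X * Q) := by rw [← r6, map_mul, e4]
  have e9 : Y * Y = 1 := by rw [hY, ← map_mul, r9, map_one]
  have e0 : ρ (rp 0) = 1 := by rw [r10, map_one]
  have dQ : Q.det = 1 := by
    have h1 : (ρ D).det * (ρ D⁻¹).det = 1 := by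
      rw [← Matrix.det_mul, ← map_mul, mul_inv_cancel, map_one, Matrix.det_one]
    have h2 : (ρ D).det * Q.det = (Q.det * Q.det * (Q.det * Q.det)) * (ρ D).det := by
      rw [← Matrix.det_mul, ← Matrix.det_mul, ← Matrix.det_mul, ← Matrix.det_mul, ← e6, ← map_mul,
        ← map_mul, ← map_mul, rD]
    have h3 : Q.det * Q.det * (Q.det * Q.det) * Q.det = 1 := by
      rw [← Matrix.det_mul, ← Matrix.det_mul, ← Matrix.det_mul, e5, Matrix.det_one]
    have h4 : (ρ D).det ≠ 0 := left_ne_zero_of_mul_eq_one h1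
    have h5 : Q.det = Q.det * Q.det * (Q.det * Q.det) := by
      apply mul_left_cancel₀ h4; rw [h2]; ring
    rw [← h5] at h3
    rw [h3, one_mul] at h5
    exact h5
  have dX : X.det = 1 := by
    have h1 : X.det * X.det * X.det * X.det ≠ 0 := by
      intro h
      have : (Y * Y).det = 0 := by
        rw [← e1, Matrix.det_mul, Matrix.det_mul, ← h]; ring
      rw [e9, Matrix.det_one] at this
      exact one_ne_zero this
    have h2 : X.det * X.det * X.det = X.det * X.det := by
      have := congrArg Matrix.det (e3.trans e1.symm)
      simp only [Matrix.det_mul, dQ, mul_one] at this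
      exact this
    have h3 : X.det * X.det ≠ 0 := left_ne_zero_of_mul (left_ne_zero_of_mul h1)
    exact mul_left_cancel₀ h3 (by rw [h2, mul_one])
  have dY : Y.det = 1 := by rw [← e1, Matrix.det_mul, dX, one_mul]
  rcases M2.sq_one Y dY e9 with hY1 | hY1
  · -- trivial case
    left
    rw [hY1] at e1 e3
    have key : Q = 1 ∧ X = 1 := by
      rcases M2.sq_one X dX e1 with h | h
      · rw [h] at e3
        simp only [one_mul] at e3
        have h5 : Q * Q = 1 := by
          calc Q * Q = Q * Q * (Q * Q * Q) := by rw [e3, mul_one]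
            _ = Q * Q * (Q * Q) * Q := by simp only [mul_assoc]
            _ = 1 := e5
        rw [h5, one_mul] at e3
        exact ⟨e3, h⟩
      · rw [h] at e3
        have e3' : Q * Q * Q = -1 := by
          rw [← e3]; simp
        have h5 : Q * Q = -1 := by
          have : Q * Q * (Q * Q) * Q = - (Q * Q) := by
            rw [mul_assoc (Q * Q), e3', mul_neg, mul_one]
          rw [e5] at this
          rw [this, neg_neg]
        rw [h5] at e3'
        have hq : Q = 1 := by simpa using e3'
        rw [hq, mul_one] at h5
        exact absurd h5 M2.one_ne_neg
    obtain ⟨q1, x1⟩ := key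
    have hk : ∀ k, ρ (rp k) = 1 := by
      intro k
      fin_cases k
      · exact e0
      · exact hY1
      · exact x1
      · exact e33.trans (by rw [hY1, q1, x1]; simp)
      · exact e4.trans (by rw [q1, x1]; simp)
      · exact q1
      · exact e6.trans (by rw [q1]; simp)
      · exact e7.trans (by rw [hY1, q1]; simp)
      · exact e8.trans (by rw [hY1, q1]; simp)
    intro m
    obtain ⟨x, hx⟩ := conj_rp m
    have hm : m = x⁻¹ * rp (cl m) * x := by rw [← hx]; group
    rw [hm, map_mul, map_mul, hk, mul_one, ← map_mul, inv_mul_cancel, map_one]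
  · right
    rw [hY1] at e1 e3 e7 e8 e33
    have hX1 : X ≠ 1 := by
      intro h
      rw [h, one_mul] at e1
      exact M2.one_ne_neg e1
    have tX : X.trace = 0 := by
      have hc := M2.ch X dX
      rw [e1] at hc
      have hc' : X.trace • X = 0 := by
        have := congrArg (· + 1) hc
        simpa using this.symm
      rcases smul_eq_zero.mp hc' with h | h
      · exact h
      · rw [h] at dX; simp at dX
    have X5 : X * X * (X * X) * X = X := by rw [e1]; simp
    have tW : (X * Q).trace = 1 := by
      have dW : (X * Q).det = 1 := by rw [Matrix.det_mul, dX, dQ, one_mul]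
      set W := X * Q with hW
      have hc := M2.ch W dW
      have hc3 : W * W * W = (W.trace ^ 2 - 1) • W - W.trace • 1 := by
        rw [hc, sub_mul, smul_mul_assoc, hc, smul_sub, smul_smul, one_mul, sub_smul, one_smul]
        ring_nf
        abel
      rw [e3] at hc3
      have hc4 : (W.trace ^ 2 - 1) • W = (W.trace - 1) • 1 := by
        rw [sub_smul W.trace, one_smul, eq_sub_iff_add_eq]
        have := congrArg (fun a => a + W.trace • (1 : M2) + 1) hc3
        simp only [sub_add_cancel] at this
        rw [← this]; abel
      by_cases h0 : W.trace ^ 2 - 1 = 0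
      · rw [h0, zero_smul] at hc4
        have := congrFun (congrFun hc4 0) 0
        simp at this
        linear_combination (-1 : ℂ) * this
      · exfalso
        rcases M2.scal W dW _ _ h0 hc4 with h | h
        · rw [h] at e3
          simp only [mul_one] at e3
          exact M2.one_ne_neg e3
        · have hq : Q = X := by
            have := congrArg (fun a => X * a) h
            simp only [hW, ← mul_assoc, e1] at this
            simpa using this
          rw [hq, X5] at e5
          exact hX1 e5
    have hXQ : X * Q ≠ Q * X := by
      intro hcomm
      have hc : Commute X Q := hcomm
      have h1 : (X * Q) ^ 3 = -1 := by rw [← e3]; simp only [pow_succ, pow_zero, one_mul]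
      have h2 : X ^ 2 = -1 := by rw [pow_two, e1]
      have h5 : Q ^ 5 = 1 := by rw [← e5]; simp only [pow_succ, pow_zero, one_mul, mul_assoc]
      have h3 : (X * Q) ^ 15 = -1 := by
        rw [show 15 = 3 * 5 by norm_num, pow_mul, h1]; rw [Odd.neg_one_pow (by decide)]
      rw [hc.mul_pow, show 15 = 2 * 7 + 1 by norm_num, pow_succ X, pow_mul, h2,
        show 2 * 7 + 1 = 5 * 3 by norm_num, pow_mul Q, h5, Odd.neg_one_pow (by decide)] at h3
      simp at h3
      exact hX1 h3
    have hQ1 : Q ≠ 1 := by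
      intro h; apply hXQ; rw [h]; simp
    have tQ : Q.trace ^ 2 + Q.trace - 1 = 0 := by
      have hc := M2.ch Q dQ
      set t := Q.trace with ht
      have hc4 : Q * Q * (Q * Q) = (t ^ 3 - 2 * t) • Q - (t ^ 2 - 1) • 1 := by
        rw [hc, sub_mul, mul_sub, smul_mul_smul_comm, hc, smul_sub, smul_smul, one_mul, mul_one]
        module
      have hc5 : Q * Q * (Q * Q) * Q = (t ^ 4 - 3 * t ^ 2 + 1) • Q - (t ^ 3 - 2 * t) • 1 := by
        rw [hc4, sub_mul, smul_mul_assoc, hc, smul_mul_assoc, one_mul]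
        module
      rw [e5] at hc5
      have hc6 : (t ^ 4 - 3 * t ^ 2 + 1) • Q = (t ^ 3 - 2 * t + 1) • 1 := by
        rw [add_smul (t ^ 3 - 2 * t), one_smul]
        exact sub_eq_iff_eq_add'.mp hc5.symm
      by_cases h0 : t ^ 4 - 3 * t ^ 2 + 1 = 0
      · rw [h0, zero_smul] at hc6
        have := congrFun (congrFun hc6 0) 0
        simp at this
        have h7 : (t - 1) * (t ^ 2 + t - 1) = 0 := by linear_combination (-1 : ℂ) * this
        rcases mul_eq_zero.mp h7 with h | h
        · have : t = 1 := by linear_combination h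
          rw [this] at h0; norm_num at h0
        · exact h
      · exfalso
        rcases M2.scal Q dQ _ _ h0 hc6 with h | h
        · exact hQ1 h
        · rw [h] at e5
          simp at e5
          exact M2.one_ne_neg e5.symm
    refine ⟨Q.trace, tQ, ?_, rp 2, rp 5, hXQ⟩
    have tQQ : (Q * Q).trace = -1 - Q.trace := by
      rw [M2.ch Q dQ, Matrix.trace_sub, Matrix.trace_smul, Matrix.trace_one, smul_eq_mul]
      simp
      linear_combination tQ
    intro m
    rw [rep2_trace_conj]
    generalize cl m = k
    fin_cases k
    · exact (congrArg Matrix.trace e0).trans (by simp [al])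
    · exact (congrArg Matrix.trace hY1).trans (by simp [al])
    · exact tX
    · exact (congrArg Matrix.trace e33).trans (by simp [al, tW])
    · exact (congrArg Matrix.trace e4).trans (by simp [al, tW])
    · exact rfl
    · exact (congrArg Matrix.trace e6).trans tQQ
    · exact (congrArg Matrix.trace e7).trans (by simp [al])
    · exact (congrArg Matrix.trace e8).trans (by simp [al, tQQ]; ring)

theorem M2.centralizer (X Q Y : M2) (h : X * Q ≠ Q * X) (h1 : X * Y = Y * X) (h2 : Q * Y = Y * Q) :
    Y = (Y 0 0) • 1 := by
  have a1 := congrFun (congrFun h1 0) 0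
  have a2 := congrFun (congrFun h1 0) 1
  have a3 := congrFun (congrFun h1 1) 0
  have b1 := congrFun (congrFun h2 0) 0
  have b2 := congrFun (congrFun h2 0) 1
  have b3 := congrFun (congrFun h2 1) 0
  simp only [Matrix.mul_apply, Fin.sum_univ_two] at a1 a2 a3 b1 b2 b3
  -- if some coordinate of the traceless part of `Y` is nonzero then `X` and `Q` commute
  have key : ∀ u : ℂ, u = Y 0 1 ∨ u = Y 1 0 ∨ u = Y 0 0 - Y 1 1 → u = 0 := by
    intro u hu
    by_contra hne
    apply h
    have c1 : u * (X 0 1 * Q 1 0 - Q 0 1 * X 1 0) = 0 := by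
      rcases hu with rfl | rfl | rfl
      · linear_combination X 0 1 * (-1 : ℂ) * b1 + Q 0 1 * a1
      · linear_combination Q 1 0 * a1 - X 1 0 * b1
      · linear_combination (-(X 0 0 - X 1 1)) * b1 - Q 1 0 * a2 - Q 0 1 * a3
    have c2 : u * ((X 0 0 - X 1 1) * Q 0 1 - (Q 0 0 - Q 1 1) * X 0 1) = 0 := by
      rcases hu with rfl | rfl | rfl
      · linear_combination Q 0 1 * a2 - X 0 1 * b2
      · linear_combination X 0 1 * b3 + (X 0 0 - X 1 1) * b1 + Q 1 0 * a2
      · linear_combination (X 0 0 - X 1 1) * b2 * (-1 : ℂ) + (Q 0 0 - Q 1 1) * a2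
    have c3 : u * ((X 0 0 - X 1 1) * Q 1 0 - (Q 0 0 - Q 1 1) * X 1 0) = 0 := by
      rcases hu with rfl | rfl | rfl
      · linear_combination (-(X 0 0 - X 1 1)) * b1 - Q 0 1 * a3 - X 1 0 * b2
      · linear_combination Q 1 0 * a3 * (-1 : ℂ) + X 1 0 * b3
      · linear_combination (X 0 0 - X 1 1) * b3  - (Q 0 0 - Q 1 1) * a3
    have d1 := (mul_eq_zero.mp c1).resolve_left hne
    have d2 := (mul_eq_zero.mp c2).resolve_left hne
    have d3 := (mul_eq_zero.mp c3).resolve_left hne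
    ext i j
    fin_cases i <;> fin_cases j <;> simp [Matrix.mul_apply, Fin.sum_univ_two]
    · linear_combination d1
    · linear_combination d2
    · linear_combination (-1 : ℂ) * d3
    · linear_combination (-1 : ℂ) * d1
  have k1 := key _ (Or.inl rfl)
  have k2 := key _ (Or.inr (Or.inl rfl))
  have k3 := key _ (Or.inr (Or.inr rfl))
  have k3' : Y 1 1 = Y 0 0 := by linear_combination (-1 : ℂ) * k3
  ext i j
  fin_cases i <;> fin_cases j <;> simp [k1, k2, k3']

/-- A central product of `SL(2,5)` and `C`, in terms of an embedding of `SL(2,5)`. -/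
structure CP (G : Type) [Group G] (C : Subgroup G) where
  /-- the embedding -/
  j : SL25 →* G
  hprod : ∀ g : G, ∃ m : SL25, ∃ c : C, g = j m * c
  hcomm : ∀ (m : SL25) (c : C), j m * c = c * j m
  hcen : ∀ m : SL25, j m ∈ C → ∀ x : SL25, m * x = x * m

theorem CP.sum_eq {G : Type} [Group G] [Fintype G] {C : Subgroup G} [Fintype C] (P : CP G C)
    (F : G → ℂ) : (Nat.card G : ℂ)⁻¹ * ∑ g, F g =
      (120 : ℂ)⁻¹ * ((Nat.card C : ℂ)⁻¹ * ∑ m : SL25, ∑ c : C, F (P.j m * c)) := by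
  classical
  let π : SL25 × C →* G := MonoidHom.noncommCoprod P.j C.subtype (fun m c => P.hcomm m c)
  have hπ : ∀ x : SL25 × C, π x = P.j x.1 * x.2 := fun x => rfl
  have hsurj : Function.Surjective π := by
    intro g
    obtain ⟨m, c, rfl⟩ := P.hprod g
    exact ⟨(m, c), rfl⟩
  obtain ⟨K, hK⟩ : ∃ K : ℕ, ∀ g, (Finset.univ.filter fun x => π x = g).card = K := by
    refine ⟨(Finset.univ.filter fun x => π x = 1).card, fun g => ?_⟩
    exact MonoidHom.card_fiber_eq_of_mem_range π (hsurj g) ⟨1, map_one _⟩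
  have key : ∀ F : G → ℂ, ∑ m : SL25, ∑ c : C, F (P.j m * c) = K * ∑ g, F g := by
    intro F
    rw [← Fintype.sum_prod_type' (fun m (c : C) => F (P.j m * c))]
    rw [← Finset.sum_fiberwise (s := Finset.univ) (g := π), Finset.mul_sum]
    refine Finset.sum_congr rfl fun g _ => ?_
    rw [← hK g, ← nsmul_eq_mul, ← Finset.sum_const]
    refine Finset.sum_congr rfl fun x hx => ?_
    rw [← (Finset.mem_filter.mp hx).2, hπ]
  have h120 : (Fintype.card SL25 : ℂ) = 120 := by
    have := sum_cl (fun _ => 1)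
    simp only [Finset.sum_const, Finset.card_univ, nsmul_eq_mul, mul_one] at this
    rw [this]
    simp [Fin.sum_univ_succ, szE]
    norm_num
  have h1 := key (fun _ => 1)
  simp only [Finset.sum_const, Finset.card_univ, nsmul_eq_mul, mul_one] at h1
  rw [h120] at h1
  rw [key, Nat.card_eq_fintype_card, Nat.card_eq_fintype_card]
  have hC : (Fintype.card C : ℂ) ≠ 0 := Nat.cast_ne_zero.mpr Fintype.card_ne_zero
  have hG : (Fintype.card G : ℂ) ≠ 0 := Nat.cast_ne_zero.mpr Fintype.card_ne_zero
  field_simp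
  linear_combination (∑ g, F g) * h1

theorem CP.norm_eq {G : Type} [Group G] [Fintype G] {C : Subgroup G} [Fintype C] (P : CP G C)
    (f : G → ℂ) (a : Fin 9 → ℂ) (b : C → ℂ) (h : ∀ m (c : C), f (P.j m * c) = a (cl m) * b c) :
    ip f f = ((120 : ℂ)⁻¹ * ∑ k, (szE k : ℂ) * a k ^ 2) *
      ((Nat.card C : ℂ)⁻¹ * ∑ c : C, b c * b c⁻¹) := by
  rw [ip, P.sum_eq, ← sum_cl]
  have : ∀ m, ∑ c : C, f (P.j m * c) * f (P.j m * c)⁻¹ = a (cl m) ^ 2 * ∑ c : C, b c * b c⁻¹ := by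
    intro m
    rw [Finset.mul_sum]
    refine Finset.sum_congr rfl fun c _ => ?_
    have h2 : (P.j m * (c : G))⁻¹ = P.j m⁻¹ * ((c⁻¹ : C) : G) := by
      rw [P.hcomm, mul_inv_rev, map_inv]; rfl
    rw [h2, h, h, cl_inv]
    ring
  rw [Finset.sum_congr rfl fun m _ => this m, ← Finset.sum_mul]
  ring

theorem CP.irr {G : Type} [Group G] [Fintype G] {C : Subgroup G} [Fintype C] (P : CP G C)
    (f : G → ℂ) (a : Fin 9 → ℂ) (b : C → ℂ) (h : ∀ m (c : C), f (P.j m * c) = a (cl m) * b c)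
    (hf : f ∈ VChar G) (ha : ∑ k, (szE k : ℂ) * a k ^ 2 = 120)
    (hb : (Nat.card C : ℂ)⁻¹ * ∑ c : C, b c * b c⁻¹ = 1) (d : ℕ) (hd : a 0 = d) (hb1 : b 1 = 1) :
    f ∈ IrrChar G ∧ charDeg f = d := by
  have h1 : f 1 = d := by
    have := h 1 1
    simpa [cl_one, hd, hb1] using this
  have h2 : f ∈ IrrChar G := by
    refine irr_of_norm_one hf ?_ d h1
    rw [P.norm_eq f a b h, ha, hb]; norm_num
  refine ⟨h2, ?_⟩
  have := (deg_pos_irr h2).2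
  rw [h1] at this
  exact_mod_cast this.symm

theorem CP.lam_norm {C : Type} [Group C] [Fintype C] (lam : C →* ℂ) :
    (Nat.card C : ℂ)⁻¹ * ∑ c : C, lam c * lam c⁻¹ = 1 := by
  have : ∀ c, lam c * lam c⁻¹ = 1 := fun c => by rw [← map_mul, mul_inv_cancel, map_one]
  simp only [this]
  simp

theorem irr2_matrix {G : Type} [Group G] [Finite G] {f : G → ℂ} (hf : f ∈ IrrChar G)
    (hd : charDeg f = 2) : ∃ ρ : G →* M2, ∀ g, f g = (ρ g).trace := by
  have h1 := (deg_pos_irr hf).2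
  rw [hd] at h1
  obtain ⟨V, hV, rfl⟩ := hf
  have hr : Module.finrank ℂ V = 2 := by
    have := FDRep.char_one V
    simp only [this] at h1
    exact_mod_cast h1
  let b := Module.finBasisOfFinrankEq ℂ V hr
  refine ⟨((LinearMap.toMatrixAlgEquiv b : _ →* M2)).comp V.ρ, fun g => ?_⟩
  exact LinearMap.trace_eq_matrix_trace ℂ b _

/-- dichotomy for irreducible characters of degree two -/
theorem CP.deg2 {G : Type} [Group G] [Finite G] {C : Subgroup G} (P : CP G C)
    {f : G → ℂ} (hf : f ∈ IrrChar G) (hd : charDeg f = 2) :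
    (∀ m (c : C), f (P.j m * c) = f c) ∨
    ∃ t : ℂ, t ^ 2 + t - 1 = 0 ∧ ∃ lam : C →* ℂ, ∀ m (c : C), f (P.j m * c) = al t (cl m) * lam c := by
  obtain ⟨ρ, hρ⟩ := irr2_matrix hf hd
  rcases rep2_dichotomy (ρ.comp P.j) with h | ⟨t, ht, htr, x, y, hxy⟩
  · left
    intro m c
    have := h m
    rw [MonoidHom.comp_apply] at this
    rw [hρ, hρ, map_mul, this, one_mul]
  · right
    have hc : ∀ c : C, ρ c = (ρ c 0 0) • 1 := by
      intro c
      refine M2.centralizer _ _ _ hxy ?_ ?_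
      · rw [MonoidHom.comp_apply, ← map_mul, P.hcomm, map_mul]
      · rw [MonoidHom.comp_apply, ← map_mul, P.hcomm, map_mul]
    refine ⟨t, ht, ⟨⟨fun c => ρ c 0 0, by simp⟩, ?_⟩, ?_⟩
    · intro c d
      change ρ ((c : G) * d) 0 0 = _
      rw [map_mul, hc c]
      simp
    · intro m c
      rw [hρ, map_mul, hc c, mul_smul_comm, mul_one, Matrix.trace_smul, ← htr, smul_eq_mul, mul_comm]
      rfl

/-- permutation matrices of self-maps -/
noncomputable def pmat : Function.End (Fin 5) →* Matrix (Fin 5) (Fin 5) ℂ where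
  toFun s := Matrix.of fun i k => if s k = i then 1 else 0
  map_one' := by
    ext i k
    simp only [Matrix.of_apply, Matrix.one_apply, Function.End.one_def, id]
    simp only [eq_comm]
  map_mul' s u := by
    ext i k
    simp only [Matrix.of_apply, Matrix.mul_apply, Function.End.mul_def, Function.comp]
    simp

theorem pmat_trace (s : Fin 5 → Fin 5) :
    (pmat (s : Function.End (Fin 5))).trace = ((Finset.univ.filter fun i => s i = i).card : ℂ) := by
  simp [pmat, Matrix.trace]

theorem pmat_act_trace (m : SL25) :
    (pmat (actEnd m)).trace = (![5, 5, 1, 2, 2, 0, 0, 0, 0] (cl m) : ℕ) := by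
  have h : (pmat (actEnd m)).trace = (pmat (actEnd (rp (cl m)))).trace := by
    obtain ⟨x, hx⟩ := conj_rp m
    rw [← hx, map_mul, map_mul, Matrix.trace_mul_comm, ← map_mul, ← map_mul]
    congr 3
    group
  rw [h, ← actEnd_fix]
  exact pmat_trace (actF (rp (cl m)))

/-- values of the degree four character of `A_5` -/
def aval (k : Fin 9) : ℂ := ![4, 4, 0, 1, 1, -1, -1, -1, -1] k

theorem CP.exists_A {G : Type} [Group G] {C : Subgroup G} (P : CP G C) :
    ∃ A ∈ VChar G, ∀ m (c : C), A (P.j m * c) = aval (cl m) := by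
  choose μ γ hμ using P.hprod
  have key : ∀ m (c : C), actEnd (μ (P.j m * c)) = actEnd m := by
    intro m c
    have h1 := hμ (P.j m * c)
    set m' := μ (P.j m * c)
    have h2 : P.j (m⁻¹ * m') = c * (γ (P.j m * c) : G)⁻¹ := by
      rw [map_mul, map_inv, eq_mul_inv_iff_mul_eq, mul_assoc, ← h1]
      group
    have h3 : P.j (m⁻¹ * m') ∈ C := by
      rw [h2]; exact C.mul_mem c.2 (C.inv_mem (γ _).2)
    have h4 := actEnd_central _ (P.hcen _ h3)
    have : m' = m * (m⁻¹ * m') := by group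
    rw [this, map_mul, h4, mul_one]
  let ψ : G →* Matrix (Fin 5) (Fin 5) ℂ :=
    { toFun := fun g => pmat (actEnd (μ g))
      map_one' := by
        have := key 1 1
        simp only [map_one, Subgroup.coe_one, mul_one] at this
        rw [this, map_one]
      map_mul' := by
        intro g h
        obtain ⟨m, c, rfl⟩ := P.hprod g
        obtain ⟨m', c', rfl⟩ := P.hprod h
        have : P.j m * c * (P.j m' * c') = P.j (m * m') * ((c * c' : C) : G) := by
          rw [map_mul, Subgroup.coe_mul, mul_assoc, ← mul_assoc (c : G), ← P.hcomm]
          simp only [mul_assoc]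
        rw [this, key, key, key, map_mul, map_mul] }
  have hψ : ∀ m (c : C), ψ (P.j m * c) = pmat (actEnd m) := by
    intro m c
    change pmat (actEnd (μ _)) = _
    rw [key]
  let R : Representation ℂ G (Fin 5 → ℂ) :=
    (Matrix.toLinAlgEquiv' : Matrix (Fin 5) (Fin 5) ℂ ≃ₐ[ℂ] _).toAlgHom.toRingHom.toMonoidHom.comp ψ
  refine ⟨R.character - 1, sub_mem (vchar_rep _ R) (one_mem _), fun m c => ?_⟩
  have : R.character (P.j m * c) = (ψ (P.j m * c)).trace := by
    exact Matrix.trace_toLin'_eq _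
  rw [Pi.sub_apply, this, hψ, pmat_act_trace, Pi.one_apply]
  generalize cl m = k
  fin_cases k <;> simp [aval] <;> norm_num

theorem root1 {r : ℂ} (h : r ^ 2 + r - 1 = 0) : r * (r * r - 2) = -1 := by
  linear_combination (r - 1) * h
theorem root2 {r : ℂ} (h : r ^ 2 + r - 1 = 0) : r * ((r * r) ^ 2 - 4 * (r * r) + 3) = 1 := by
  linear_combination (r ^ 3 - r ^ 2 - 2 * r + 1) * h
theorem root3 {r : ℂ} (h : r ^ 2 + r - 1 = 0) :
    r * ((r * r) ^ 3 - 7 * (r * r) ^ 2 + 14 * (r * r) - 7) = -1 - r := by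
  linear_combination (r ^ 5 - r ^ 4 - 5 * r ^ 3 + 4 * r ^ 2 + 5 * r - 1) * h
theorem root_other {r : ℂ} (h : r ^ 2 + r - 1 = 0) : (-1 - r) ^ 2 + (-1 - r) - 1 = 0 := by
  linear_combination h
theorem root_cases {r s : ℂ} (h : r ^ 2 + r - 1 = 0) (hs : s ^ 2 + s - 1 = 0) :
    s = r ∨ s = -1 - r := by
  have : (s - r) * (s - (-1 - r)) = 0 := by linear_combination hs - h
  rcases mul_eq_zero.mp this with h | h
  · left; linear_combination h
  · right; linear_combination h

/-- values of the faithful degree four character -/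
def bval (k : Fin 9) : ℂ := ![4, -4, 0, 1, -1, -1, -1, 1, 1] k
/-- values of the faithful degree six character -/
def dval (k : Fin 9) : ℂ := ![6, -6, 0, 0, 0, 1, 1, -1, -1] k

theorem al_b {t : ℂ} (h : t ^ 2 + t - 1 = 0) (k : Fin 9) :
    al t k * (al t k * al t k - 2) = bval k := by
  have h1 := root1 h
  have h2 := root1 (root_other h)
  fin_cases k <;> simp [al, bval]
  · norm_num
  · norm_num
  · norm_num
  · norm_num
  · exact h1
  · exact h2
  · linear_combination (-1 : ℂ) * h1
  · linear_combination (-1 : ℂ) * h2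

theorem al_d {t : ℂ} (h : t ^ 2 + t - 1 = 0) (k : Fin 9) :
    al t k * ((al t k * al t k) ^ 2 - 4 * (al t k * al t k) + 3) = dval k := by
  have h1 := root2 h
  have h2 := root2 (root_other h)
  fin_cases k <;> simp [al, dval]
  · norm_num
  · norm_num
  · norm_num
  · norm_num
  · exact h1
  · exact h2
  · first | linear_combination (-1 : ℂ) * h1 | linear_combination h1
  · linear_combination (-1 : ℂ) * h2

theorem al_o {t : ℂ} (h : t ^ 2 + t - 1 = 0) (k : Fin 9) :
    al t k * ((al t k * al t k) ^ 3 - 7 * (al t k * al t k) ^ 2 + 14 * (al t k * al t k) - 7)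
      = al (-1 - t) k := by
  have h1 := root3 h
  have h2 := root3 (root_other h)
  fin_cases k <;> simp [al]
  · norm_num
  · norm_num
  · norm_num
  · norm_num
  · exact h1
  · linear_combination h2
  · linear_combination (-1 : ℂ) * h1
  · linear_combination (-1 : ℂ) * h2

theorem al_a {t : ℂ} (h : t ^ 2 + t - 1 = 0) (k : Fin 9) :
    al t k * al (-1 - t) k = aval k := by
  fin_cases k <;> simp [al, aval]
  · norm_num
  · norm_num
  · first | linear_combination (-1 : ℂ) * h | linear_combination h
  · first | linear_combination (-1 : ℂ) * h | linear_combination h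
  · first | linear_combination (-1 : ℂ) * h | linear_combination h
  · first | linear_combination (-1 : ℂ) * h | linear_combination h

theorem norm_al {t : ℂ} (h : t ^ 2 + t - 1 = 0) : ∑ k, (szE k : ℂ) * al t k ^ 2 = 120 := by
  simp [Fin.sum_univ_succ, szE, al]
  linear_combination 48 * h
theorem norm_a : ∑ k, (szE k : ℂ) * aval k ^ 2 = 120 := by
  simp [Fin.sum_univ_succ, szE, aval]; norm_num
theorem norm_b : ∑ k, (szE k : ℂ) * bval k ^ 2 = 120 := by
  simp [Fin.sum_univ_succ, szE, bval]; norm_num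
theorem norm_d : ∑ k, (szE k : ℂ) * dval k ^ 2 = 120 := by
  simp [Fin.sum_univ_succ, szE, dval]; norm_num

theorem irr_dual {G : Type} [Group G] {f : G → ℂ} (hf : f ∈ IrrChar G) :
    (fun g => f g⁻¹) ∈ VChar G := by
  obtain ⟨V, hV, rfl⟩ := hf
  have := vchar_rep _ (Representation.dual V.ρ)
  convert this using 1
  ext g
  exact (FDRep.char_dual V g).symm

/-- `f` is the product of `a` on `SL(2,5)` and the linear character `lam` on `C`. -/
def CP.Is {G : Type} [Group G] {C : Subgroup G} (P : CP G C) (a : Fin 9 → ℂ) (lam : C →* ℂ)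
    (f : G → ℂ) : Prop := ∀ m (c : C), f (P.j m * c) = a (cl m) * lam c

theorem CP.Is.irr {G : Type} [Group G] [Finite G] {C : Subgroup G} {P : CP G C} {a : Fin 9 → ℂ}
    {lam : C →* ℂ} {f : G → ℂ} (h : P.Is a lam f) (hf : f ∈ VChar G)
    (ha : ∑ k, (szE k : ℂ) * a k ^ 2 = 120) (d : ℕ) (hd : a 0 = d) :
    f ∈ IrrChar G ∧ charDeg f = d := by
  have := Fintype.ofFinite G
  have := Fintype.ofFinite C
  exact P.irr f a lam h hf ha (CP.lam_norm lam) d hd (map_one lam)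

theorem CP.ext {G : Type} [Group G] {C : Subgroup G} (P : CP G C) {f f' : G → ℂ}
    (h : ∀ m (c : C), f (P.j m * c) = f' (P.j m * c)) : f = f' := by
  ext g
  obtain ⟨m, c, rfl⟩ := P.hprod g
  exact h m c

theorem CP.Is.lam_eq {G : Type} [Group G] {C : Subgroup G} {P : CP G C} {a : Fin 9 → ℂ}
    {lam lam' : C →* ℂ} {f : G → ℂ} (h : P.Is a lam f) (h' : P.Is a lam' f) (ha : a 0 ≠ 0) :
    lam = lam' := by
  ext c
  have h1 := (h 1 c).symm.trans (h' 1 c)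
  rw [cl_one] at h1
  exact mul_left_cancel₀ ha h1

theorem CP.Is.vals {G : Type} [Group G] [Finite G] {C : Subgroup G} {P : CP G C} {t : ℂ}
    {lam : C →* ℂ} {f : G → ℂ} (h : P.Is (al t) lam f) (hf : f ∈ VChar G)
    (ht : t ^ 2 + t - 1 = 0) :
    (∃ f' ∈ VChar G, P.Is (al (-1 - t)) lam f') ∧ (∃ f' ∈ VChar G, P.Is bval lam f') ∧
    (∃ f' ∈ VChar G, P.Is dval lam f') ∧
    (∃ E ∈ VChar G, ∀ m (c : C), E (P.j m * c) = al t (cl m) * lam c⁻¹) := by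
  have hi := h.irr hf (norm_al ht) 2 rfl
  have hdu := irr_dual hi.1
  set f₁ : G → ℂ := fun g => f g⁻¹ with hf₁
  have h1 : ∀ m (c : C), f₁ (P.j m * c) = al t (cl m) * lam c⁻¹ := by
    intro m c
    have h2 : (P.j m * (c : G))⁻¹ = P.j m⁻¹ * ((c⁻¹ : C) : G) := by
      rw [P.hcomm, mul_inv_rev, map_inv]; rfl
    rw [hf₁]
    simp only
    rw [h2, h, cl_inv]
  have hE : f * f₁ ∈ VChar G := mul_mem hf hdu
  have h2 : ∀ m (c : C), (f * f₁) (P.j m * c) = al t (cl m) * al t (cl m) := by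
    intro m c
    rw [Pi.mul_apply, h, h1]
    have : lam c * lam c⁻¹ = 1 := by rw [← map_mul, mul_inv_cancel, map_one]
    linear_combination al t (cl m) * al t (cl m) * this
  have n1 : ∀ n : ℕ, (n : G → ℂ) ∈ VChar G := fun n => natCast_mem _ n
  refine ⟨⟨f * ((f * f₁) ^ 3 - (7 : ℕ) * (f * f₁) ^ 2 + (14 : ℕ) * (f * f₁) - (7 : ℕ)), ?_, ?_⟩,
    ⟨f * ((f * f₁) - (2 : ℕ)), ?_, ?_⟩,
    ⟨f * ((f * f₁) ^ 2 - (4 : ℕ) * (f * f₁) + (3 : ℕ)), ?_, ?_⟩, ⟨f₁, hdu, h1⟩⟩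
  · exact mul_mem hf (sub_mem (add_mem (sub_mem (pow_mem hE _) (mul_mem (n1 _) (pow_mem hE _)))
      (mul_mem (n1 _) hE)) (n1 _))
  · intro m c
    have : ∀ x y : G → ℂ, ∀ g, (x * (y ^ 3 - (7 : ℕ) * y ^ 2 + (14 : ℕ) * y - (7 : ℕ))) g
        = x g * (y g ^ 3 - 7 * y g ^ 2 + 14 * y g - 7) := fun x y g => by simp
    rw [this, h2, h, ← al_o ht]; ring
  · exact mul_mem hf (sub_mem hE (n1 _))
  · intro m c
    have : ∀ x y : G → ℂ, ∀ g, (x * (y - (2 : ℕ))) g = x g * (y g - 2) := fun x y g => by simp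
    rw [this, h2, h, ← al_b ht]; ring
  · exact mul_mem hf (add_mem (sub_mem (pow_mem hE _) (mul_mem (n1 _) hE)) (n1 _))
  · intro m c
    have : ∀ x y : G → ℂ, ∀ g, (x * (y ^ 2 - (4 : ℕ) * y + (3 : ℕ))) g
        = x g * (y g ^ 2 - 4 * y g + 3) := fun x y g => by simp
    rw [this, h2, h, ← al_d ht]; ring

theorem exists_root : ∃ t : ℂ, t ^ 2 + t - 1 = 0 := by
  obtain ⟨s, hs⟩ := IsAlgClosed.exists_pow_nat_eq (5 : ℂ) (n := 2) (by norm_num)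
  exact ⟨(s - 1) / 2, by linear_combination hs / 4⟩

/-- irreducible characters of degree `d` -/
def irrDeg (G : Type) [Group G] (d : ℕ) : Set (G → ℂ) := {f | f ∈ IrrChar G ∧ charDeg f = d}

theorem irrDeg_finite (G : Type) [Group G] [Finite G] (d : ℕ) : (irrDeg G d).Finite :=
  (irr_finite G).subset fun _ h => h.1

theorem CP.counts {G : Type} [Group G] [Finite G] {C : Subgroup G} (P : CP G C) :
    ∃ n l : ℕ, (irrDeg G 2).ncard ≤ n + 2 * l ∧ 2 * l ≤ (irrDeg G 4).ncard ∧
      l ≤ (irrDeg G 6).ncard ∧ n ≤ (irrDeg G 8).ncard ∧ (irrDeg G 4).Nonempty := by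
  classical
  obtain ⟨A, hA, hAv⟩ := P.exists_A
  obtain ⟨t, ht⟩ := exists_root
  have hfin := irrDeg_finite G
  -- the set of linear characters
  let Lam : Set (C →* ℂ) := {lam | ∃ f ∈ VChar G, P.Is (al t) lam f}
  let N : Set (G → ℂ) := {f | f ∈ irrDeg G 2 ∧ ∀ m (c : C), f (P.j m * c) = f c}
  have hAone : P.Is aval 1 A := by
    intro m c
    rw [hAv]; simp
  have e1 : ∀ lam ∈ Lam, ∃ f, f ∈ irrDeg G 2 ∧ P.Is (al t) lam f := by
    rintro lam ⟨f, hf, h⟩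
    exact ⟨f, h.irr hf (norm_al ht) 2 rfl, h⟩
  have e2 : ∀ lam ∈ Lam, ∃ f, f ∈ irrDeg G 2 ∧ P.Is (al (-1 - t)) lam f := by
    rintro lam ⟨f, hf, h⟩
    obtain ⟨f', hf', h'⟩ := (h.vals hf ht).1
    exact ⟨f', h'.irr hf' (norm_al (root_other ht)) 2 rfl, h'⟩
  have e4 : ∀ lam ∈ Lam, ∃ f, f ∈ irrDeg G 4 ∧ P.Is bval lam f := by
    rintro lam ⟨f, hf, h⟩
    obtain ⟨f', hf', h'⟩ := (h.vals hf ht).2.1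
    exact ⟨f', h'.irr hf' norm_b 4 rfl, h'⟩
  have e6 : ∀ lam ∈ Lam, ∃ f, f ∈ irrDeg G 6 ∧ P.Is dval lam f := by
    rintro lam ⟨f, hf, h⟩
    obtain ⟨f', hf', h'⟩ := (h.vals hf ht).2.2.1
    exact ⟨f', h'.irr hf' norm_d 6 rfl, h'⟩
  have e4' : ∃ lam₀ : C →* ℂ, ∀ lam ∈ Lam, ∃ f, f ∈ irrDeg G 4 ∧ P.Is aval (lam * lam₀) f := by
    by_cases hne : Lam.Nonempty
    · obtain ⟨lam₁, f₁, hf₁, h₁⟩ := hne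
      obtain ⟨f₂, hf₂, h₂⟩ := (h₁.vals hf₁ ht).1
      obtain ⟨E, hE, hEv⟩ := (h₂.vals hf₂ (root_other ht)).2.2.2
      let lam₀ : C →* ℂ :=
        { toFun := fun c => lam₁ c⁻¹
          map_one' := by simp
          map_mul' := fun c d => by rw [mul_inv_rev, map_mul, mul_comm] }
      refine ⟨lam₀, ?_⟩
      rintro lam ⟨f, hf, h⟩
      have h' : P.Is aval (lam * lam₀) (f * E) := by
        intro m c
        rw [Pi.mul_apply, h, hEv, ← al_a ht, MonoidHom.mul_apply]
        change _ = _ * (lam c * lam₁ c⁻¹)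
        ring
      exact ⟨f * E, h'.irr (mul_mem hf hE) norm_a 4 rfl, h'⟩
    · exact ⟨1, fun lam hl => absurd ⟨lam, hl⟩ hne⟩
  obtain ⟨lam₀, e4'⟩ := e4'
  choose! F1 hF1 hF1' using e1
  choose! F2 hF2 hF2' using e2
  choose! F4 hF4 hF4' using e4
  choose! F6 hF6 hF6' using e6
  choose! FA hFA hFA' using e4'
  have i1 : Set.InjOn F1 Lam := fun x hx y hy hxy =>
    (hF1' x hx).lam_eq (hxy ▸ hF1' y hy) (by simp [al])
  have i4 : Set.InjOn F4 Lam := fun x hx y hy hxy =>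
    (hF4' x hx).lam_eq (hxy ▸ hF4' y hy) (by simp [bval])
  have i6 : Set.InjOn F6 Lam := fun x hx y hy hxy =>
    (hF6' x hx).lam_eq (hxy ▸ hF6' y hy) (by simp [dval])
  have iA : Set.InjOn FA Lam := by
    intro x hx y hy hxy
    have h0 : x * lam₀ = y * lam₀ :=
      (hFA' x hx).lam_eq (hxy ▸ hFA' y hy) (by simp [aval])
    ext c
    have h1 := DFunLike.congr_fun h0 c
    simp only [MonoidHom.mul_apply] at h1
    refine mul_right_cancel₀ ?_ h1
    intro h2
    have h3 : lam₀ c * lam₀ c⁻¹ = 1 := by rw [← map_mul, mul_inv_cancel, map_one]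
    rw [h2, zero_mul] at h3
    exact zero_ne_one h3
  have hLfin : Lam.Finite :=
    Set.Finite.of_finite_image ((hfin 2).subset (Set.image_subset_iff.mpr hF1)) i1
  have hNfin : N.Finite := (hfin 2).subset fun f h => h.1
  refine ⟨N.ncard, Lam.ncard, ?_, ?_, ?_, ?_, ⟨A, hAone.irr hA norm_a 4 rfl⟩⟩
  · have hsub : irrDeg G 2 ⊆ N ∪ (F1 '' Lam ∪ F2 '' Lam) := by
      intro f hf
      rcases P.deg2 hf.1 hf.2 with h | ⟨s, hs, lam, h⟩
      · exact Or.inl ⟨hf, h⟩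
      · right
        have h : P.Is (al s) lam f := h
        have hv : f ∈ VChar G := by
          obtain ⟨V, -, hV⟩ := hf.1
          rw [hV]; exact vchar_char V
        rcases root_cases ht hs with rfl | rfl
        · have hl : lam ∈ Lam := ⟨f, hv, h⟩
          left
          exact ⟨lam, hl, P.ext fun m c => by rw [h, hF1' lam hl]⟩
        · have hl : lam ∈ Lam := by
            obtain ⟨f', hf', h'⟩ := (h.vals hv hs).1
            refine ⟨f', hf', ?_⟩
            rwa [show -1 - (-1 - t) = t by ring] at h'
          right
          exact ⟨lam, hl, P.ext fun m c => by rw [h, hF2' lam hl]⟩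
    calc (irrDeg G 2).ncard ≤ (N ∪ (F1 '' Lam ∪ F2 '' Lam)).ncard :=
          Set.ncard_le_ncard hsub (hNfin.union ((hLfin.image _).union (hLfin.image _)))
      _ ≤ N.ncard + ((F1 '' Lam).ncard + (F2 '' Lam).ncard) :=
          (Set.ncard_union_le _ _).trans (Nat.add_le_add_left (Set.ncard_union_le _ _) _)
      _ ≤ _ := by
          have h1 := Set.ncard_image_le (f := F1) hLfin
          have h2 := Set.ncard_image_le (f := F2) hLfin
          omega
  · have hd : Disjoint (F4 '' Lam) (FA '' Lam) := by
      rw [Set.disjoint_left]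
      rintro _ ⟨x, hx, rfl⟩ ⟨y, hy, hxy⟩
      have h1 := hF4' x hx (rp 1) 1
      have h2 := hFA' y hy (rp 1) 1
      rw [hxy, h1, cl_rp] at h2
      simp [bval, aval] at h2
      norm_num at h2
    have hsub : F4 '' Lam ∪ FA '' Lam ⊆ irrDeg G 4 :=
      Set.union_subset (Set.image_subset_iff.mpr hF4) (Set.image_subset_iff.mpr hFA)
    have := Set.ncard_le_ncard hsub (hfin 4)
    rw [Set.ncard_union_eq hd (hLfin.image _) (hLfin.image _), Set.ncard_image_of_injOn i4,
      Set.ncard_image_of_injOn iA] at this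
    omega
  · have hs : F6 '' Lam ⊆ irrDeg G 6 := Set.image_subset_iff.mpr hF6
    have := Set.ncard_le_ncard hs (hfin 6)
    rwa [Set.ncard_image_of_injOn i6] at this
  · have hA0 : ∀ c : C, A c = 4 := by
      intro c
      have := hAv 1 c
      rw [map_one, one_mul, cl_one] at this
      exact this
    have hmem : ∀ f ∈ N, A * f ∈ irrDeg G 8 := by
      rintro f ⟨hf, h⟩
      have := Fintype.ofFinite G
      have := Fintype.ofFinite C
      have hn := P.norm_eq f 1 (fun c => f c) (fun m c => by rw [h]; simp)
      rw [ip_irr hf.1 hf.1, if_pos rfl] at hn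
      have h1 : ((120 : ℂ)⁻¹ * ∑ k, (szE k : ℂ) * (1 : Fin 9 → ℂ) k ^ 2) = 1 := by
        simp [Fin.sum_univ_succ, szE]; norm_num
      rw [h1, one_mul] at hn
      have hv : f ∈ VChar G := by
        obtain ⟨V, -, hV⟩ := hf.1
        rw [hV]; exact vchar_char V
      have hf1 : f 1 = 2 := by
        rw [(deg_pos_irr hf.1).2, hf.2]; rfl
      have hv2 : A * f ∈ VChar G := mul_mem hA hv
      have hnorm : ip (A * f) (A * f) = 1 := by
        rw [P.norm_eq (A * f) aval (fun c => f c) (fun m c => by rw [Pi.mul_apply, hAv, h]),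
          norm_a, ← hn]
        norm_num
      have h8 : (A * f) 1 = (8 : ℕ) := by
        have := hA0 1
        rw [Subgroup.coe_one] at this
        rw [Pi.mul_apply, this, hf1]; norm_num
      have hirr := irr_of_norm_one hv2 hnorm 8 h8
      refine ⟨hirr, ?_⟩
      have := (deg_pos_irr hirr).2
      rw [h8] at this
      exact_mod_cast this.symm
    have hinj : Set.InjOn (fun f => A * f) N := by
      intro f hf f' hf' hff
      refine P.ext fun m c => ?_
      rw [hf.2, hf'.2]
      have h1 := congrFun hff (c : G)
      simp only [Pi.mul_apply, hA0] at h1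
      exact mul_left_cancel₀ (by norm_num) h1
    exact Set.ncard_le_ncard_of_injOn _ hmem hinj (hfin 8)

theorem acde_of_counts {G : Type} [Group G] [Finite G] {n l : ℕ}
    (h2 : (irrDeg G 2).ncard ≤ n + 2 * l) (h4 : 2 * l ≤ (irrDeg G 4).ncard)
    (h6 : l ≤ (irrDeg G 6).ncard) (h8 : n ≤ (irrDeg G 8).ncard) (hne : (irrDeg G 4).Nonempty) :
    18 / 5 ≤ acde G := by
  classical
  have hS : {χ ∈ IrrChar G | Even (charDeg χ)}.Finite := (irr_finite G).subset fun _ h => h.1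
  set T := hS.toFinset with hT
  have hST : {χ ∈ IrrChar G | Even (charDeg χ)} = (T : Set (G → ℂ)) := hS.coe_toFinset.symm
  have hmem : ∀ f, f ∈ T ↔ f ∈ IrrChar G ∧ Even (charDeg f) := fun f => hS.mem_toFinset
  have hcard : ∀ d, Even d → ∑ f ∈ T, (if charDeg f = d then (1 : ℝ) else 0) =
      (irrDeg G d).ncard := by
    intro d hd
    have : irrDeg G d = (T.filter fun f => charDeg f = d : Finset (G → ℂ)) := by
      ext f
      simp only [irrDeg, Set.mem_setOf_eq, Finset.coe_filter, hmem]
      constructor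
      · rintro ⟨a, b⟩; exact ⟨⟨a, b ▸ hd⟩, b⟩
      · rintro ⟨⟨a, _⟩, b⟩; exact ⟨a, b⟩
    rw [this, Set.ncard_coe_finset, Finset.sum_boole]
  unfold acde acdRel
  rw [hST, finsum_mem_coe_finset, Set.ncard_coe_finset]
  have hpos : 0 < T.card := by
    obtain ⟨f, hf⟩ := hne
    exact Finset.card_pos.mpr ⟨f, (hmem f).mpr ⟨hf.1, by rw [hf.2]; decide⟩⟩
  rw [le_div_iff₀ (by exact_mod_cast hpos)]
  have key : ∑ f ∈ T, (-(8 / 5) * (if charDeg f = 2 then (1 : ℝ) else 0) +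
      2 / 5 * (if charDeg f = 4 then (1 : ℝ) else 0) +
      12 / 5 * (if charDeg f = 6 then (1 : ℝ) else 0) +
      22 / 5 * (if charDeg f = 8 then (1 : ℝ) else 0)) ≤ ∑ f ∈ T, ((charDeg f : ℝ) - 18 / 5) := by
    refine Finset.sum_le_sum fun f hf => ?_
    obtain ⟨hf1, hf2⟩ := (hmem f).mp hf
    have hp := (deg_pos_irr hf1).1
    generalize charDeg f = d at *
    obtain ⟨k, rfl⟩ := hf2
    by_cases hk : k ≤ 4
    · interval_cases k <;> first | (exfalso; omega) | norm_num
    · have h5 : (5 : ℝ) ≤ k := by exact_mod_cast (by omega : 5 ≤ k)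
      rw [if_neg (by omega), if_neg (by omega), if_neg (by omega), if_neg (by omega)]
      push_cast
      linarith
  simp only [Finset.sum_add_distrib, ← Finset.mul_sum, Finset.sum_sub_distrib, Finset.sum_const,
    nsmul_eq_mul] at key
  rw [hcard 2 (by decide), hcard 4 (by decide), hcard 6 (by decide), hcard 8 (by decide)] at key
  have g2 : ((irrDeg G 2).ncard : ℝ) ≤ n + 2 * l := by exact_mod_cast h2
  have g4 : 2 * (l : ℝ) ≤ (irrDeg G 4).ncard := by exact_mod_cast h4
  have g6 : (l : ℝ) ≤ (irrDeg G 6).ncard := by exact_mod_cast h6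
  have g8 : (n : ℝ) ≤ (irrDeg G 8).ncard := by exact_mod_cast h8
  have gl : (0 : ℝ) ≤ l := Nat.cast_nonneg l
  have gn : (0 : ℝ) ≤ n := Nat.cast_nonneg n
  linarith

/-- If the finite group `G` is a central product `G = MC` with `M ≅ SL(2,5)` and
`M ∩ C = Z(M)`, then `acde(G) ≥ 18/5`. -/
theorem acde_ge_of_central_product_SL25 (G : Type) [Group G] [Finite G] (M C : Subgroup G)
    (hprod : ∀ g : G, ∃ m ∈ M, ∃ c ∈ C, g = m * c)
    (hcomm : ∀ m ∈ M, ∀ c ∈ C, m * c = c * m)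
    (hM : Nonempty (M ≃* Matrix.SpecialLinearGroup (Fin 2) (ZMod 5)))
    (hZ : M ⊓ C = (Subgroup.center ↥M).map M.subtype) :
    18 / 5 ≤ acde G := by
  obtain ⟨e⟩ := hM
  have P : CP G C :=
    { j := M.subtype.comp e.symm.toMonoidHom
      hprod := by
        intro g
        obtain ⟨m, hm, c, hc, h⟩ := hprod g
        exact ⟨e ⟨m, hm⟩, ⟨c, hc⟩, by simp [h]⟩
      hcomm := fun m c => hcomm _ (e.symm m).2 _ c.2
      hcen := by
        intro m hm x
        have h1 : ((e.symm m : M) : G) ∈ M ⊓ C := ⟨(e.symm m).2, hm⟩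
        rw [hZ] at h1
        obtain ⟨y, hy, hyx⟩ := h1
        have h2 : y = e.symm m := Subtype.ext hyx
        have h3 := Subgroup.mem_center_iff.mp hy (e.symm x)
        rw [h2, ← map_mul, ← map_mul] at h3
        exact (e.symm.injective h3).symm }
  obtain ⟨n, l, h2, h4, h6, h8, hne⟩ := P.counts
  exact acde_of_counts h2 h4 h6 h8 hne
end

section
/- The average of the degrees of those irreducible complex characters of SL(2,5) whose degree is not divisible by 3 equals 3; that is, acd_{3'}(SL(2,5)) = 3. -/
open CategoryTheory

namespace SL25

/-- Elements `a + bζ + cζ² + dζ³` of the ring of integers of the fifth cyclotomic field. -/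
abbrev Cyc := ℤ × ℤ × ℤ × ℤ

def cadd (x y : Cyc) : Cyc :=
  (x.1 + y.1, x.2.1 + y.2.1, x.2.2.1 + y.2.2.1, x.2.2.2 + y.2.2.2)

def cmul (x y : Cyc) : Cyc :=
  let t4 := x.2.1 * y.2.2.2 + x.2.2.1 * y.2.2.1 + x.2.2.2 * y.2.1
  (x.1 * y.1 + x.2.2.1 * y.2.2.2 + x.2.2.2 * y.2.2.1 - t4,
   x.1 * y.2.1 + x.2.1 * y.1 + x.2.2.2 * y.2.2.2 - t4,
   x.1 * y.2.2.1 + x.2.1 * y.2.1 + x.2.2.1 * y.1 - t4,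
   x.1 * y.2.2.2 + x.2.1 * y.2.2.1 + x.2.2.1 * y.2.1 + x.2.2.2 * y.1 - t4)

noncomputable def ev (z : ℂ) (x : Cyc) : ℂ :=
  x.1 + x.2.1 * z + x.2.2.1 * z ^ 2 + x.2.2.2 * z ^ 3

lemma ev_add (z : ℂ) (x y : Cyc) : ev z (cadd x y) = ev z x + ev z y := by
  simp only [ev, cadd]; push_cast; ring

lemma ev_mul (z : ℂ) (hz : 1 + z + z ^ 2 + z ^ 3 + z ^ 4 = 0) (x y : Cyc) :
    ev z (cmul x y) = ev z x * ev z y := by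
  have h4 : z ^ 4 = -1 - z - z ^ 2 - z ^ 3 := by linear_combination hz
  have h5 : z ^ 5 = 1 := by linear_combination (z - 1) * hz
  have h6 : z ^ 6 = z := by linear_combination z * h5
  simp only [ev, cmul]; push_cast; ring_nf
  simp only [h4, h5, h6]; ring

/-- Two by two matrices, by rows. -/
abbrev CMat := Cyc × Cyc × Cyc × Cyc

def mmul (x y : CMat) : CMat :=
  (cadd (cmul x.1 y.1) (cmul x.2.1 y.2.2.1), cadd (cmul x.1 y.2.1) (cmul x.2.1 y.2.2.2),
   cadd (cmul x.2.2.1 y.1) (cmul x.2.2.2 y.2.2.1),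
   cadd (cmul x.2.2.1 y.2.1) (cmul x.2.2.2 y.2.2.2))

noncomputable def mev (z : ℂ) (x : CMat) : Matrix (Fin 2) (Fin 2) ℂ :=
  !![ev z x.1, ev z x.2.1; ev z x.2.2.1, ev z x.2.2.2]

lemma mev_mul (z : ℂ) (hz : 1 + z + z ^ 2 + z ^ 3 + z ^ 4 = 0) (x y : CMat) :
    mev z (mmul x y) = mev z x * mev z y := by
  simp [mev, mmul, ev_mul z hz, ev_add]

/-- Powers of `ζ`. -/
def zp : Fin 5 → Cyc := ![(1,0,0,0), (0,1,0,0), (0,0,1,0), (0,0,0,1), (-1,-1,-1,-1)]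

def qt : Fin 5 → Cyc := ![(0,0,0,0), (1,0,0,0), (-1,0,-1,-1), (1,0,1,1), (-1,0,0,0)]

/-- Image of the upper unitriangular element. -/
def um (x : Fin 5) : CMat := (zp x, qt x, (0,0,0,0), zp (-x))
/-- Image of the lower unitriangular element. -/
def lm (y : Fin 5) : CMat := (zp y, (0,0,0,0), qt y, zp (-y))

def bigCell (a c d : Fin 5) : CMat :=
  mmul (um ((a - 1) * (c * c * c))) (mmul (lm c) (um ((d - 1) * (c * c * c))))

def rep (a b c d : Fin 5) : CMat :=
  if c = 0 then mmul (lm (-1)) (bigCell a a (d + b)) else bigCell a c d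

set_option synthInstance.maxHeartbeats 400000 in
set_option synthInstance.maxSize 1000 in
lemma rep_u : ∀ x a b c d : Fin 5, a * d - b * c = 1 →
    rep (a + x * c) (b + x * d) c d = mmul (rep 1 x 0 1) (rep a b c d) := by
  decide +kernel

set_option synthInstance.maxHeartbeats 400000 in
set_option synthInstance.maxSize 1000 in
lemma rep_l : ∀ x a b c d : Fin 5, a * d - b * c = 1 →
    rep a b (c + x * a) (d + x * b) = mmul (rep 1 0 x 1) (rep a b c d) := by
  decide +kernel

def rtr (a b c d : Fin 5) : Cyc := cadd (rep a b c d).1 (rep a b c d).2.2.2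

lemma rtr_inv : ∀ a b c d : Fin 5, a * d - b * c = 1 →
    rtr d (-b) (-c) a = rtr a b c d := by
  decide +kernel

def vals : List Cyc :=
  [(2,0,0,0), (-2,0,0,0), (0,0,0,0), (-1,0,0,0), (1,0,0,0),
   (-1,0,-1,-1), (0,0,1,1), (1,0,1,1), (0,0,-1,-1)]

lemma rtr_mem : ∀ a b c d : Fin 5, a * d - b * c = 1 → rtr a b c d ∈ vals := by
  decide +kernel
set_option synthInstance.maxHeartbeats 400000 in
set_option synthInstance.maxSize 1000 in
lemma rtr_two : ∀ a b c d : Fin 5, a * d - b * c = 1 → rtr a b c d = (2,0,0,0) →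
    a = 1 ∧ b = 0 ∧ c = 0 ∧ d = 1 := by
  decide +kernel

abbrev G := Matrix.SpecialLinearGroup (Fin 2) (ZMod 5)

def tr (g : G) : Cyc := rtr (g.1 0 0) (g.1 0 1) (g.1 1 0) (g.1 1 1)

lemma cards : vals.map (fun v => (Finset.univ.filter (fun g : G => tr g = v)).card) =
   [1,1,30,20,20,12,12,12,12] := by
  decide +kernel
section general
variable {G : Type} [Group G] [Fintype G]

/-- The (bilinear) scalar product of functions. -/
noncomputable def ip (f h : G → ℂ) : ℂ := (Nat.card G : ℂ)⁻¹ * ∑ g, f g * h g⁻¹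

lemma ip_self {χ : G → ℂ} (h : χ ∈ IrrChar G) : ip χ χ = 1 := by
  obtain ⟨V, hV, rfl⟩ := h
  have := invertibleOfNonzero (NeZero.ne (Nat.card G : ℂ))
  have := FDRep.char_orthonormal V V
  rw [if_pos ⟨Iso.refl V⟩] at this
  simpa [ip] using this

lemma ip_ne {χ ψ : G → ℂ} (h : χ ∈ IrrChar G) (h' : ψ ∈ IrrChar G) (hne : χ ≠ ψ) :
    ip χ ψ = 0 := by
  obtain ⟨V, hV, rfl⟩ := h
  obtain ⟨W, hW, rfl⟩ := h'
  have := invertibleOfNonzero (NeZero.ne (Nat.card G : ℂ))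
  have := FDRep.char_orthonormal V W
  rw [if_neg (fun ⟨i⟩ => hne (FDRep.char_iso i))] at this
  simpa [ip] using this

/-- Virtual characters. -/
noncomputable abbrev VC (G : Type) [Group G] : Submodule ℤ (G → ℂ) := Submodule.span ℤ (IrrChar G)

lemma char_mem_aux (n : ℕ) : ∀ (V : Type) [AddCommGroup V] [Module ℂ V] [FiniteDimensional ℂ V]
    (ρ : Representation ℂ G V), Module.finrank ℂ V = n → ρ.character ∈ VC G := by
  induction n using Nat.strong_induction_on with
  | _ n ih =>
  intro V _ _ _ ρ hn
  have hinv := invertibleOfNonzero (NeZero.ne (Nat.card G : ℂ))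
  by_cases hirr : ρ.IsIrreducible
  · apply Submodule.subset_span
    refine ⟨FDRep.of ρ, ?_, rfl⟩
    rw [FDRep.simple_iff_char_is_norm_one]
    have := Representation.char_orthonormal ρ ρ
    rw [if_pos ⟨Representation.Equiv.refl ρ⟩, inv_mul_eq_one₀ (NeZero.ne _)] at this
    exact this.symm
  by_cases hnt : Nontrivial V
  · have hss : Representation.IsSemisimpleRepresentation ρ := inferInstance
    obtain ⟨σ, hσ, hσ'⟩ : ∃ σ : Subrepresentation ρ, σ ≠ ⊥ ∧ σ ≠ ⊤ := by
      by_contra! hcon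
      apply hirr
      have : Nontrivial (Subrepresentation ρ) := by
        refine ⟨⊥, ⊤, fun h => ?_⟩
        have := congrArg Subrepresentation.toSubmodule h
        exact bot_ne_top this
      exact { eq_bot_or_eq_top := fun a => or_iff_not_imp_left.2 (hcon a) }
    obtain ⟨τ, hτ⟩ := exists_isCompl σ
    have hc : IsCompl σ.toSubmodule τ.toSubmodule := by
      constructor
      · rw [disjoint_iff, ← Subrepresentation.toSubmodule_inf, hτ.inf_eq_bot]; rfl
      · rw [codisjoint_iff, ← Subrepresentation.toSubmodule_sup, hτ.sup_eq_top]; rfl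
    have hsum : ρ.character = σ.toRepresentation.character + τ.toRepresentation.character := by
      ext g
      let e := Submodule.prodEquivOfIsCompl _ _ hc
      have he : ρ g = e.conj ((σ.toRepresentation g).prodMap (τ.toRepresentation g)) := by
        rw [LinearEquiv.conj_apply]
        rw [LinearEquiv.eq_comp_toLinearMap_symm]
        apply LinearMap.ext
        rintro ⟨a, b⟩
        simp [e, Subrepresentation.toRepresentation]
      simp only [Representation.character, Pi.add_apply]
      rw [he, LinearMap.trace_conj', LinearMap.trace_prodMap']
    have hdim := Submodule.finrank_add_eq_of_isCompl hc
    have h1 : 0 < Module.finrank ℂ σ.toSubmodule := by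
      rw [Nat.pos_iff_ne_zero, Ne, Submodule.finrank_eq_zero]
      exact fun h => hσ (Subrepresentation.toSubmodule_injective h)
    have h2 : 0 < Module.finrank ℂ τ.toSubmodule := by
      rw [Nat.pos_iff_ne_zero, Ne, Submodule.finrank_eq_zero]
      intro h
      have : τ = ⊥ := Subrepresentation.toSubmodule_injective h
      subst this
      exact hσ' (by simpa using hτ.sup_eq_top)
    rw [hsum]
    exact add_mem (ih _ (by omega) _ _ rfl) (ih _ (by omega) _ _ rfl)
  · have : ρ.character = 0 := by
      rw [not_nontrivial_iff_subsingleton] at hnt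
      ext g
      simp [Representation.character, Subsingleton.elim (ρ g) 0]
    rw [this]; exact zero_mem _

lemma char_mem {V : Type} [AddCommGroup V] [Module ℂ V] [FiniteDimensional ℂ V]
    (ρ : Representation ℂ G V) : ρ.character ∈ VC G := char_mem_aux _ V ρ rfl

lemma mul_mem {f h : G → ℂ} (hf : f ∈ VC G) (hh : h ∈ VC G) : f * h ∈ VC G := by
  induction hf using Submodule.span_induction with
  | zero => simp
  | add x y _ _ hx hy => rw [add_mul]; exact add_mem hx hy
  | smul a x _ hx => rw [smul_mul_assoc]; exact Submodule.smul_mem _ _ hx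
  | mem x hx =>
    induction hh using Submodule.span_induction with
    | zero => simp
    | add x y _ _ hx hy => rw [mul_add]; exact add_mem hx hy
    | smul a x _ hx => rw [mul_smul_comm]; exact Submodule.smul_mem _ _ hx
    | mem y hy =>
      obtain ⟨V, hV, rfl⟩ := hx
      obtain ⟨W, hW, rfl⟩ := hy
      have := char_mem (Representation.tprod V.ρ W.ρ)
      rw [Representation.char_tensor] at this
      exact this

lemma one_mem : (1 : G → ℂ) ∈ VC G := by
  have := char_mem (Representation.trivial ℂ G ℂ)
  convert this
  ext g
  simp [Representation.character]

lemma irr_one_pos {χ : G → ℂ} (h : χ ∈ IrrChar G) : ∃ n : ℕ, 0 < n ∧ χ 1 = n := by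
  have h1 := ip_self h
  obtain ⟨V, hV, rfl⟩ := h
  refine ⟨Module.finrank ℂ V, ?_, FDRep.char_one V⟩
  by_contra! h0
  have hs : Subsingleton V := (Module.finrank_zero_iff (R := ℂ)).1 (by omega)
  have : (fun g => V.character g) = 0 := by
    ext g
    simp [FDRep.character, Subsingleton.elim (V.ρ g) 0]
  rw [this] at h1
  simp [ip] at h1

lemma ip_add_left (f f' h : G → ℂ) : ip (f + f') h = ip f h + ip f' h := by
  simp [ip, add_mul, Finset.sum_add_distrib, mul_add]

lemma ip_zsmul_left (n : ℤ) (f h : G → ℂ) : ip (n • f) h = n * ip f h := by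
  simp only [ip, Pi.smul_apply, zsmul_eq_mul, mul_assoc, ← Finset.mul_sum]; ring

lemma ip_comm (f h : G → ℂ) : ip f h = ip h f := by
  unfold ip
  congr 1
  refine Fintype.sum_equiv (Equiv.inv G) _ _ fun g => by simp [mul_comm]

lemma ip_sum_left {ι : Type*} (s : Finset ι) (f : ι → G → ℂ) (h : G → ℂ) :
    ip (∑ i ∈ s, f i) h = ∑ i ∈ s, ip (f i) h := by
  classical
  induction s using Finset.induction_on with
  | empty => simp [ip]
  | insert a s ha ih => rw [Finset.sum_insert ha, Finset.sum_insert ha, ip_add_left, ih]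

lemma irr_of_norm {θ : G → ℂ} (hθ : θ ∈ VC G) (h1 : ip θ θ = 1) (n : ℕ) (hd : θ 1 = n) :
    θ ∈ IrrChar G := by
  classical
  obtain ⟨c, hc, hsum⟩ := Submodule.mem_span_set.1 hθ
  rw [Finsupp.sum] at hsum
  have key : ∀ χ ∈ IrrChar G, ip θ χ = c χ := by
    intro χ hχ
    rw [← hsum, ip_sum_left]
    simp_rw [ip_zsmul_left]
    rw [Finset.sum_eq_single χ]
    · rw [ip_self hχ, mul_one]
    · intro b hb hne
      rw [ip_ne (hc hb) hχ hne, mul_zero]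
    · intro h; simp [Finsupp.notMem_support_iff.1 h]
  have hsq : ∑ χ ∈ c.support, (c χ) ^ 2 = 1 := by
    have : ip θ θ = ∑ χ ∈ c.support, (c χ : ℂ) ^ 2 := by
      conv_lhs => rw [← hsum, ip_sum_left, hsum]
      refine Finset.sum_congr rfl fun χ hχ => ?_
      rw [ip_zsmul_left, ip_comm, key χ (hc hχ), sq]
    rw [h1] at this
    exact_mod_cast this.symm
  have hpos : ∀ χ ∈ c.support, 1 ≤ (c χ) ^ 2 := by
    intro χ hχ
    have := Finsupp.mem_support_iff.1 hχ
    have : 0 < (c χ) ^ 2 := by positivity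
    omega
  have hcard : c.support.card = 1 := by
    have h2 : (c.support.card : ℤ) ≤ 1 := by
      rw [← hsq]
      simpa using Finset.sum_le_sum hpos
    have h3 : c.support.card ≠ 0 := by
      intro h; rw [Finset.card_eq_zero] at h; simp [h] at hsq
    omega
  obtain ⟨χ, hχ⟩ := Finset.card_eq_one.1 hcard
  have hχI : χ ∈ IrrChar G := hc (by simp [hχ])
  rw [hχ, Finset.sum_singleton] at hsum hsq
  obtain ⟨m, hm, hm'⟩ := irr_one_pos hχI
  rcases mul_self_eq_one_iff.1 ((sq (c χ)).symm.trans hsq) with h | h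
  · rw [h, one_smul] at hsum; rwa [← hsum]
  · exfalso
    rw [h] at hsum
    have := congrFun hsum 1
    simp [hm', hd] at this
    have h0 : ((m + n : ℕ) : ℂ) = 0 := by push_cast; linear_combination -this
    have := Nat.cast_eq_zero.1 h0
    omega
end general

section main

lemma det_eq (g : G) : g.1 0 0 * g.1 1 1 - g.1 0 1 * g.1 1 0 = 1 := by
  have := g.2
  rwa [Matrix.det_fin_two] at this

def grep (g : G) : CMat := rep (g.1 0 0) (g.1 0 1) (g.1 1 0) (g.1 1 1)

def U (x : ZMod 5) : G := ⟨!![1, x; 0, 1], by simp [Matrix.det_fin_two]⟩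
def Lo (x : ZMod 5) : G := ⟨!![1, 0; x, 1], by simp [Matrix.det_fin_two]⟩

lemma val_mul (g h : G) : (g * h).1 = g.1 * h.1 := rfl
lemma val_U (x : ZMod 5) : (U x).1 = !![1, x; 0, 1] := rfl
lemma val_Lo (x : ZMod 5) : (Lo x).1 = !![1, 0; x, 1] := rfl

lemma grep_U (x : ZMod 5) (g : G) : grep (U x * g) = mmul (grep (U x)) (grep g) := by
  have := rep_u x (g.1 0 0) (g.1 0 1) (g.1 1 0) (g.1 1 1) (det_eq g)
  have e : grep (U x * g) = rep (g.1 0 0 + x * g.1 1 0) (g.1 0 1 + x * g.1 1 1)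
      (g.1 1 0) (g.1 1 1) := by
    simp [grep, val_mul, val_U, val_Lo, Matrix.mul_apply, Fin.sum_univ_two]
  rw [e]; exact this

lemma grep_Lo (x : ZMod 5) (g : G) : grep (Lo x * g) = mmul (grep (Lo x)) (grep g) := by
  have := rep_l x (g.1 0 0) (g.1 0 1) (g.1 1 0) (g.1 1 1) (det_eq g)
  have e : grep (Lo x * g) = rep (g.1 0 0) (g.1 0 1)
      (g.1 1 0 + x * g.1 0 0) (g.1 1 1 + x * g.1 0 1) := by
    simp [grep, val_mul, val_U, val_Lo, Matrix.mul_apply, Fin.sum_univ_two, add_comm]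
  rw [e]; exact this

instance : Fact (Nat.Prime 5) := ⟨by norm_num⟩

lemma decomp (g : G) (h : g.1 1 0 ≠ 0) : ∃ x y z, g = U x * (Lo y * U z) := by
  refine ⟨(g.1 0 0 - 1) / g.1 1 0, g.1 1 0, (g.1 1 1 - 1) / g.1 1 0, ?_⟩
  have hd := det_eq g
  apply Subtype.ext
  ext i j
  fin_cases i <;> fin_cases j
  · simp [val_mul, val_U, val_Lo, Matrix.mul_apply, Fin.sum_univ_two]
    field_simp; ring
  · simp [val_mul, val_U, val_Lo, Matrix.mul_apply, Fin.sum_univ_two]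
    field_simp; linear_combination (-1 : ZMod 5) * hd
  · simp [val_mul, val_U, val_Lo, Matrix.mul_apply, Fin.sum_univ_two]
  · simp [val_mul, val_U, val_Lo, Matrix.mul_apply, Fin.sum_univ_two]
    field_simp; ring

lemma decomp' (g : G) (h : g.1 1 0 = 0) : ∃ g', g = Lo (-1) * g' ∧ g'.1 1 0 ≠ 0 := by
  have hd := det_eq g
  refine ⟨Lo 1 * g, ?_, ?_⟩
  · rw [← mul_assoc]
    have : Lo (-1) * Lo 1 = 1 := by
      apply Subtype.ext
      ext i j
      fin_cases i <;> fin_cases j <;> simp [val_mul, val_U, val_Lo, Matrix.mul_apply, Fin.sum_univ_two]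
    rw [this, one_mul]
  · simp [val_mul, val_U, val_Lo, Matrix.mul_apply, Fin.sum_univ_two, h]
    intro h0
    simp [h, h0] at hd

section rho
lemma mev_mul_grep (z : ℂ) (hz : 1 + z + z ^ 2 + z ^ 3 + z ^ 4 = 0)
    (h g : G) : mev z (grep (h * g)) = mev z (grep h) * mev z (grep g) := by
  have hU : ∀ x (g : G), mev z (grep (U x * g)) = mev z (grep (U x)) * mev z (grep g) := by
    intro x g; rw [grep_U, mev_mul z hz]
  have hL : ∀ x (g : G), mev z (grep (Lo x * g)) = mev z (grep (Lo x)) * mev z (grep g) := by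
    intro x g; rw [grep_Lo, mev_mul z hz]
  have main : ∀ h : G, h.1 1 0 ≠ 0 → ∀ g : G,
      mev z (grep (h * g)) = mev z (grep h) * mev z (grep g) := by
    intro h hh g
    obtain ⟨x, y, w, rfl⟩ := decomp h hh
    simp only [mul_assoc, hU, hL]
  by_cases hh : h.1 1 0 = 0
  · obtain ⟨h', rfl, h0⟩ := decomp' h hh
    rw [mul_assoc, hL, hL, main h' h0, mul_assoc]
  · exact main h hh g

lemma grep_one : grep 1 = ((1,0,0,0), (0,0,0,0), (0,0,0,0), (1,0,0,0)) := by
  decide +kernel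

/-- The two-dimensional representation attached to a primitive fifth root of unity. -/
noncomputable def rho (z : ℂ) (hz : 1 + z + z ^ 2 + z ^ 3 + z ^ 4 = 0) :
    Representation ℂ G (Fin 2 → ℂ) where
  toFun g := Matrix.toLin' (mev z (grep g))
  map_one' := by
    rw [grep_one]
    have : mev z ((1,0,0,0), (0,0,0,0), (0,0,0,0), (1,0,0,0)) = 1 := by
      simp [mev, ev, Matrix.one_fin_two]
    rw [this, Matrix.toLin'_one]; rfl
  map_mul' h g := by
    rw [mev_mul_grep z hz, Matrix.toLin'_mul]; rfl

/-- Its character. -/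
noncomputable def X (z : ℂ) (g : G) : ℂ := ev z (tr g)

lemma X_mem (z : ℂ) (hz : 1 + z + z ^ 2 + z ^ 3 + z ^ 4 = 0) : X z ∈ VC G := by
  have := char_mem (rho z hz)
  convert this
  ext g
  simp only [Representation.character, rho, X]
  change _ = LinearMap.trace ℂ _ (Matrix.toLin' (mev z (grep g)))
  rw [Matrix.trace_toLin'_eq]
  simp [mev, Matrix.trace_fin_two, tr, rtr, grep, ev_add]
end rho

lemma tr_inv (g : G) : tr g⁻¹ = tr g := by
  have := rtr_inv (g.1 0 0) (g.1 0 1) (g.1 1 0) (g.1 1 1) (det_eq g)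
  rw [tr, tr, ← this, Matrix.SpecialLinearGroup.SL2_inv_expl]
  rfl

lemma tr_eq_two {g : G} (h : tr g = (2,0,0,0)) : g = 1 := by
  obtain ⟨h1, h2, h3, h4⟩ := rtr_two _ _ _ _ (det_eq g) h
  apply Subtype.ext
  ext i j
  fin_cases i <;> fin_cases j
  · exact h1
  · exact h2
  · exact h3
  · exact h4

lemma tr_one : tr 1 = (2,0,0,0) := by decide +kernel

lemma tr_mem (g : G) : tr g ∈ vals := rtr_mem _ _ _ _ (det_eq g)

lemma card_G : Nat.card G = 120 := by
  rw [Nat.card_eq_fintype_card]; decide +kernel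

lemma sum_tr (f : Cyc → ℂ) : ∑ g : G, f (tr g) =
    f (2,0,0,0) + f (-2,0,0,0) + 30 * f (0,0,0,0) + 20 * f (-1,0,0,0) + 20 * f (1,0,0,0)
    + 12 * f (-1,0,-1,-1) + 12 * f (0,0,1,1) + 12 * f (1,0,1,1) + 12 * f (0,0,-1,-1) := by
  have h1 : ∑ g : G, f (tr g) = ∑ v ∈ vals.toFinset,
      ((Finset.univ.filter (fun g : G => tr g = v)).card : ℂ) * f v := by
    rw [← Finset.sum_fiberwise_of_maps_to (t := vals.toFinset) (g := tr)
      (fun g _ => List.mem_toFinset.2 (tr_mem g))]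
    refine Finset.sum_congr rfl fun v _ => ?_
    rw [Finset.sum_congr rfl (g := fun _ => f v), Finset.sum_const, nsmul_eq_mul]
    intro g hg
    rw [(Finset.mem_filter.1 hg).2]
  have hn : vals.Nodup := by decide
  rw [h1, List.sum_toFinset _ hn]
  have hc := cards
  simp only [vals, List.map_cons, List.map_nil, List.cons.injEq, and_true] at hc
  obtain ⟨c1, c2, c3, c4, c5, c6, c7, c8, c9⟩ := hc
  simp only [vals, List.map_cons, List.map_nil, List.sum_cons, List.sum_nil,
    c1, c2, c3, c4, c5, c6, c7, c8, c9]
  push_cast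
  ring

noncomputable def zeta : ℂ := Complex.exp (2 * Real.pi * Complex.I / (5 : ℕ))

lemma zeta_sum : 1 + zeta + zeta ^ 2 + zeta ^ 3 + zeta ^ 4 = 0 := by
  have h := (Complex.isPrimitiveRoot_exp 5 (by norm_num)).geom_sum_eq_zero (by norm_num)
  simpa [Finset.sum_range_succ, zeta] using h

lemma zeta_sum' : 1 + zeta ^ 2 + (zeta ^ 2) ^ 2 + (zeta ^ 2) ^ 3 + (zeta ^ 2) ^ 4 = 0 := by
  linear_combination (1 - zeta + zeta ^ 2 - zeta ^ 3 + zeta ^ 4) * zeta_sum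

/-- The values of the pair of two-dimensional characters on the classes. -/
noncomputable def be : ℂ := zeta ^ 2 + zeta ^ 3

lemma be_eq : be ^ 2 = 1 - be := by
  have := zeta_sum
  unfold be
  linear_combination (zeta ^ 2 + zeta - 1) * zeta_sum

noncomputable def comb (P : ℂ → ℂ → ℂ) (g : G) : ℂ := P (X zeta g) (X (zeta ^ 2) g)

lemma ev_one (a b : ℤ) : ev zeta (a, 0, b, b) = a + b * be := by
  simp only [ev, be]; push_cast; ring

lemma ev_two (a b : ℤ) : ev (zeta ^ 2) (a, 0, b, b) = a + b * (-1 - be) := by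
  simp only [ev, be]; push_cast
  linear_combination (b * (zeta ^ 2 - zeta + 1) : ℂ) * zeta_sum

lemma be3 : be ^ 3 = 2 * be - 1 := by linear_combination (be - 1) * be_eq
lemma be4 : be ^ 4 = 2 - 3 * be := by linear_combination be * be3 + 2 * be_eq
lemma be5 : be ^ 5 = 5 * be - 3 := by linear_combination be * be4 - 3 * be_eq
lemma be6 : be ^ 6 = 5 - 8 * be := by linear_combination be * be5 + 5 * be_eq
lemma be7 : be ^ 7 = 13 * be - 8 := by linear_combination be * be6 - 8 * be_eq
lemma be8 : be ^ 8 = 13 - 21 * be := by linear_combination be * be7 + 13 * be_eq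

lemma comb_one (P : ℂ → ℂ → ℂ) : comb P 1 = P 2 2 := by
  simp [comb, X, tr_one, ev]

lemma ip_comb (P : ℂ → ℂ → ℂ) : ip (comb P) (comb P) = (120 : ℂ)⁻¹ *
    (P 2 2 ^ 2 + P (-2) (-2) ^ 2 + 30 * P 0 0 ^ 2 + 20 * P (-1) (-1) ^ 2 + 20 * P 1 1 ^ 2
    + 12 * P (-1 - be) be ^ 2 + 12 * P be (-1 - be) ^ 2
    + 12 * P (1 + be) (-be) ^ 2 + 12 * P (-be) (1 + be) ^ 2) := by
  unfold ip
  rw [card_G]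
  have h : ∀ g : G, comb P g * comb P g⁻¹ =
      (fun v => P (ev zeta v) (ev (zeta ^ 2) v) ^ 2) (tr g) := by
    intro g; simp [comb, X, tr_inv, sq]
  have hs := sum_tr (fun v => P (ev zeta v) (ev (zeta ^ 2) v) ^ 2)
  rw [Finset.sum_congr rfl (fun g _ => h g)]
  refine (congrArg _ hs).trans ?_
  simp only [ev_one, ev_two]
  push_cast
  ring_nf

lemma irr_comb (P : ℂ → ℂ → ℂ) (h : comb P ∈ VC G) (n : ℕ) (hn : P 2 2 = n)
    (hs : P 2 2 ^ 2 + P (-2) (-2) ^ 2 + 30 * P 0 0 ^ 2 + 20 * P (-1) (-1) ^ 2 + 20 * P 1 1 ^ 2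
    + 12 * P (-1 - be) be ^ 2 + 12 * P be (-1 - be) ^ 2
    + 12 * P (1 + be) (-be) ^ 2 + 12 * P (-be) (1 + be) ^ 2 = 120) : comb P ∈ IrrChar G := by
  refine irr_of_norm h ?_ n ((comb_one P).trans hn)
  rw [ip_comb, hs]; norm_num

def P1 (_ _ : ℂ) : ℂ := 1
def P2 (x _ : ℂ) : ℂ := x
def P2b (_ y : ℂ) : ℂ := y
noncomputable def P3 (x _ : ℂ) : ℂ := x ^ 2 - 1
noncomputable def P3b (_ y : ℂ) : ℂ := y ^ 2 - 1
noncomputable def P4 (x y : ℂ) : ℂ := x * y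
noncomputable def P4b (x _ : ℂ) : ℂ := x ^ 3 - 2 * x
noncomputable def P5 (x y : ℂ) : ℂ := (x ^ 2 - 1) * (y ^ 2 - 1) - x * y
noncomputable def P6 (x y : ℂ) : ℂ := x * (y ^ 2 - 1)

lemma mem1a : comb P1 ∈ VC G := one_mem
lemma mem2a : comb P2 ∈ VC G := X_mem zeta zeta_sum
lemma mem2b : comb P2b ∈ VC G := X_mem (zeta ^ 2) zeta_sum'
lemma mem3a : comb P3 ∈ VC G := by
  convert sub_mem (mul_mem mem2a mem2a) mem1a using 1
  ext g; simp [comb, P1, P2, P3]; ring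
lemma mem3b : comb P3b ∈ VC G := by
  convert sub_mem (mul_mem mem2b mem2b) mem1a using 1
  ext g; simp [comb, P1, P2b, P3b]; ring
lemma mem4a : comb P4 ∈ VC G := mul_mem mem2a mem2b
lemma mem4b : comb P4b ∈ VC G := by
  convert sub_mem (mul_mem mem2a mem3a) mem2a using 1
  ext g; simp [comb, P4b, P2, P3]; ring
lemma mem5a : comb P5 ∈ VC G := sub_mem (mul_mem mem3a mem3b) mem4a
lemma mem6a : comb P6 ∈ VC G := mul_mem mem2a mem3b

lemma irr1a : comb P1 ∈ IrrChar G := by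
  refine irr_comb _ mem1a 1 (by norm_num [P1]) ?_
  simp only [P1]; norm_num
lemma irr2a : comb P2 ∈ IrrChar G := by
  refine irr_comb _ mem2a 2 (by norm_num [P2]) ?_
  simp only [P2]; ring_nf; simp only [be_eq]; ring
lemma irr2b : comb P2b ∈ IrrChar G := by
  refine irr_comb _ mem2b 2 (by norm_num [P2b]) ?_
  simp only [P2b]; ring_nf; simp only [be_eq]; ring
lemma irr3a : comb P3 ∈ IrrChar G := by
  refine irr_comb _ mem3a 3 (by norm_num [P3]) ?_
  simp only [P3]; ring_nf; simp only [be_eq, be3, be4]; ring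
lemma irr3b : comb P3b ∈ IrrChar G := by
  refine irr_comb _ mem3b 3 (by norm_num [P3b]) ?_
  simp only [P3b]; ring_nf; simp only [be_eq, be3, be4]; ring
lemma irr4a : comb P4 ∈ IrrChar G := by
  refine irr_comb _ mem4a 4 (by norm_num [P4]) ?_
  simp only [P4]; ring_nf; simp only [be_eq, be3, be4]; ring
lemma irr4b : comb P4b ∈ IrrChar G := by
  refine irr_comb _ mem4b 4 (by norm_num [P4b]) ?_
  simp only [P4b]; ring_nf; simp only [be_eq, be3, be4, be5, be6]; ring
lemma irr5a : comb P5 ∈ IrrChar G := by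
  refine irr_comb _ mem5a 5 (by norm_num [P5]) ?_
  simp only [P5]; ring_nf; simp only [be_eq, be3, be4, be5, be6, be7, be8]; ring
lemma irr6a : comb P6 ∈ IrrChar G := by
  refine irr_comb _ mem6a 6 (by norm_num [P6]) ?_
  simp only [P6]; ring_nf; simp only [be_eq, be3, be4, be5, be6]; ring

/-- The regular character. -/
noncomputable def PR (x y : ℂ) : ℂ :=
  P1 x y + 2 * P2 x y + 2 * P2b x y + 3 * P3 x y + 3 * P3b x y + 4 * P4 x y + 4 * P4b x y
    + 5 * P5 x y + 6 * P6 x y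

lemma reg_ne (g : G) (hg : g ≠ 1) : comb PR g = 0 := by
  have hv := tr_mem g
  have h2 : tr g ≠ (2,0,0,0) := fun h => hg (tr_eq_two h)
  simp only [vals, List.mem_cons, List.not_mem_nil, or_false] at hv
  unfold comb X
  rcases hv with h | h | h | h | h | h | h | h | h
  · exact absurd h h2
  all_goals
    rw [h, ev_one, ev_two]
    push_cast
    simp only [PR, P1, P2, P2b, P3, P3b, P4, P4b, P5, P6]
    ring_nf
    try simp only [be_eq, be3, be4]
    try ring

lemma reg_one : comb PR 1 = 120 := by
  rw [comb_one]; simp only [PR, P1, P2, P2b, P3, P3b, P4, P4b, P5, P6]; norm_num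

lemma ip_reg (χ : G → ℂ) : ip χ (comb PR) = χ 1 := by
  unfold ip
  rw [card_G, Finset.sum_eq_single 1]
  · rw [inv_one, reg_one]; push_cast; ring
  · intro g _ hg
    rw [reg_ne _ (inv_ne_one.2 hg), mul_zero]
  · simp

lemma reg_eq : comb PR = (1 : ℤ) • comb P1 + (2 : ℤ) • comb P2 + (2 : ℤ) • comb P2b
    + (3 : ℤ) • comb P3 + (3 : ℤ) • comb P3b + (4 : ℤ) • comb P4 + (4 : ℤ) • comb P4b
    + (5 : ℤ) • comb P5 + (6 : ℤ) • comb P6 := by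
  ext g; simp [comb, PR]

lemma irr_complete {χ : G → ℂ} (h : χ ∈ IrrChar G) :
    χ = comb P1 ∨ χ = comb P2 ∨ χ = comb P2b ∨ χ = comb P3 ∨ χ = comb P3b ∨ χ = comb P4 ∨
    χ = comb P4b ∨ χ = comb P5 ∨ χ = comb P6 := by
  by_contra! hne
  obtain ⟨h1, h2, h2b, h3, h3b, h4, h4b, h5, h6⟩ := hne
  have hr := ip_reg χ
  rw [ip_comm, reg_eq] at hr
  simp only [ip_add_left, ip_zsmul_left, ip_ne irr1a h h1.symm, ip_ne irr2a h h2.symm,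
    ip_ne irr2b h h2b.symm, ip_ne irr3a h h3.symm, ip_ne irr3b h h3b.symm, ip_ne irr4a h h4.symm,
    ip_ne irr4b h h4b.symm, ip_ne irr5a h h5.symm, ip_ne irr6a h h6.symm] at hr
  obtain ⟨n, hn, hn'⟩ := irr_one_pos h
  rw [hn'] at hr
  have h0 : (n : ℂ) = 0 := by rw [← hr]; ring
  have := Nat.cast_eq_zero.1 h0
  omega

lemma deg_comb (P : ℂ → ℂ → ℂ) (n : ℕ) (hn : P 2 2 = n) : charDeg (comb P) = n := by
  rw [charDeg, comb_one, hn]; simp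

lemma deg1a : charDeg (comb P1) = 1 := deg_comb _ _ (by norm_num [P1])
lemma deg2a : charDeg (comb P2) = 2 := deg_comb _ _ (by norm_num [P2])
lemma deg2b : charDeg (comb P2b) = 2 := deg_comb _ _ (by norm_num [P2b])
lemma deg3a : charDeg (comb P3) = 3 := deg_comb _ _ (by norm_num [P3])
lemma deg3b : charDeg (comb P3b) = 3 := deg_comb _ _ (by norm_num [P3b])
lemma deg4a : charDeg (comb P4) = 4 := deg_comb _ _ (by norm_num [P4])
lemma deg4b : charDeg (comb P4b) = 4 := deg_comb _ _ (by norm_num [P4b])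
lemma deg5a : charDeg (comb P5) = 5 := deg_comb _ _ (by norm_num [P5])
lemma deg6a : charDeg (comb P6) = 6 := deg_comb _ _ (by norm_num [P6])

lemma ne_of_deg {f h : G → ℂ} (m n : ℕ) (hf : charDeg f = m) (hh : charDeg h = n) (hmn : m ≠ n) :
    f ≠ h := by
  rintro rfl; exact hmn (hf.symm.trans hh)

lemma ne2 : comb P2 ≠ comb P2b := by
  intro h
  have h' := congrFun h (U 1)
  have ht : tr (U 1) = (-1,0,-1,-1) := by decide +kernel
  simp only [comb, X, ht, P2, P2b, ev_one, ev_two] at h'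
  push_cast at h'
  have hb : be = -1 / 2 := by linear_combination (-1 / 2 : ℂ) * h'
  have := be_eq
  rw [hb] at this
  norm_num at this

lemma ne4 : comb P4 ≠ comb P4b := by
  intro h
  have h' := congrFun h (-1)
  have ht : tr (-1) = (-2,0,0,0) := by decide +kernel
  simp only [comb, X, ht, P4, P4b, ev_one, ev_two] at h'
  norm_num at h'

open Classical in
lemma the_set : {χ ∈ IrrChar G | ¬ 3 ∣ charDeg χ} =
    (({comb P1, comb P2, comb P2b, comb P4, comb P4b, comb P5} : Finset (G → ℂ)) :
      Set (G → ℂ)) := by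
  ext χ
  simp only [Set.mem_setOf_eq, Finset.coe_insert, Finset.coe_singleton, Set.mem_insert_iff,
    Set.mem_singleton_iff]
  constructor
  · rintro ⟨h, hd⟩
    rcases irr_complete h with h | h | h | h | h | h | h | h | h
    · simp [h]
    · simp [h]
    · simp [h]
    · rw [h, deg3a] at hd; omega
    · rw [h, deg3b] at hd; omega
    · simp [h]
    · simp [h]
    · simp [h]
    · rw [h, deg6a] at hd; omega
  · rintro (h | h | h | h | h | h) <;> rw [h]
    · exact ⟨irr1a, by rw [deg1a]; omega⟩
    · exact ⟨irr2a, by rw [deg2a]; omega⟩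
    · exact ⟨irr2b, by rw [deg2b]; omega⟩
    · exact ⟨irr4a, by rw [deg4a]; omega⟩
    · exact ⟨irr4b, by rw [deg4b]; omega⟩
    · exact ⟨irr5a, by rw [deg5a]; omega⟩

end main
end SL25

open SL25

/-- The average of the degrees of the irreducible characters of `SL(2,5)` of
degree not divisible by `3` equals `3`. -/
theorem acd_three_prime_SL25 :
    acdRel (Matrix.SpecialLinearGroup (Fin 2) (ZMod 5))
      (fun χ => ¬ 3 ∣ charDeg χ) = 3 := by
  classical
  have n12 := ne_of_deg _ _ deg1a deg2a (by norm_num)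
  have n12b := ne_of_deg _ _ deg1a deg2b (by norm_num)
  have n14 := ne_of_deg _ _ deg1a deg4a (by norm_num)
  have n14b := ne_of_deg _ _ deg1a deg4b (by norm_num)
  have n15 := ne_of_deg _ _ deg1a deg5a (by norm_num)
  have n24 := ne_of_deg _ _ deg2a deg4a (by norm_num)
  have n24b := ne_of_deg _ _ deg2a deg4b (by norm_num)
  have n25 := ne_of_deg _ _ deg2a deg5a (by norm_num)
  have nbc := ne_of_deg _ _ deg2b deg4a (by norm_num)
  have nbd := ne_of_deg _ _ deg2b deg4b (by norm_num)
  have nbe := ne_of_deg _ _ deg2b deg5a (by norm_num)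
  have n45 := ne_of_deg _ _ deg4a deg5a (by norm_num)
  have nde := ne_of_deg _ _ deg4b deg5a (by norm_num)
  have e1 : comb P1 ∉ ({comb P2, comb P2b, comb P4, comb P4b, comb P5} : Finset (G → ℂ)) := by
    simp [n12, n12b, n14, n14b, n15]
  have e2 : comb P2 ∉ ({comb P2b, comb P4, comb P4b, comb P5} : Finset (G → ℂ)) := by
    simp [ne2, n24, n24b, n25]
  have e3 : comb P2b ∉ ({comb P4, comb P4b, comb P5} : Finset (G → ℂ)) := by
    simp [nbc, nbd, nbe]
  have e4 : comb P4 ∉ ({comb P4b, comb P5} : Finset (G → ℂ)) := by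
    simp [ne4, n45]
  have e5 : comb P4b ∉ ({comb P5} : Finset (G → ℂ)) := by
    simp [nde]
  rw [acdRel, the_set, finsum_mem_coe_finset, Set.ncard_coe_finset,
    Finset.sum_insert e1, Finset.sum_insert e2, Finset.sum_insert e3, Finset.sum_insert e4,
    Finset.sum_insert e5, Finset.sum_singleton,
    Finset.card_insert_of_notMem e1, Finset.card_insert_of_notMem e2,
    Finset.card_insert_of_notMem e3, Finset.card_insert_of_notMem e4,
    Finset.card_insert_of_notMem e5, Finset.card_singleton, deg1a, deg2a, deg2b, deg4a, deg4b, deg5a]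
  norm_num
end
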